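/- (Littlewood, 1914) The difference π(x) − Li(x) changes sign infinitely often: for every real T there exist real numbers x > T and y > T such that π(x) > Li(x) and π(y) < Li(y). -/

import Mathlib

open Real Filter Set

/-- `Li(x) = ∫₂ˣ dt/log t`. -/
noncomputable def Li (x : ℝ) : ℝ := ∫ t in (2:ℝ)..x, 1 / Real.log t

/-- `π(x)`: the number of primes `p ≤ x`. -/
noncomputable def primePi (x : ℝ) : ℕ := Nat.card {p : ℕ | p.Prime ∧ (p : ℝ) ≤ x}

/-!
If `ε * (Li - π)` is eventually nonnegative for some `ε = ±1`, then, up to an entire correction,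
its Mellin transform is the moment generating function of the nonpositive variable `-log x` under a
positive measure. On `re s > 1` the derivative of this transform is, up to terms regular for
`re s > 1 / 2`, a multiple of `ξ'/ξ`. As `ξ` has no zeros on the positive real axis,
Landau's theorem moves the abscissa of convergence down to `1 / 2`, so `ξ` has no zeros with
`re s > 1 / 2`.

Positivity of the measure makes the transform positive definite along vertical lines. Letting
`re s` tend to `1 / 2`, so are the residues `ε * (m γ + [γ = 0] / 2) / (1 / 2 + γ * I)`, where `m γ`
is the multiplicity of the zero `1 / 2 + γ * I` and the term at `γ = 0` comes from the squares of
primes. The value at `0` forces `ε > 0`. Testing against a Fejér kernel then bounds the number of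
zeros up to height `T` by a multiple of `T`, so that the Hadamard product of `ξ` grows at most
exponentially, whereas `ξ` grows like a factorial along the positive real axis.
-/

namespace Littlewood

open Complex (I)
open MeasureTheory ProbabilityTheory Topology Metric

theorem norm_mellin_le_add {f : ℝ → ℂ} (hf : ∀ x ∈ Ioi (0 : ℝ), f x = ‖f x‖) {a b : ℝ} {s : ℂ}
    (ha : MellinConvergent f a) (hb : MellinConvergent f b) (has : a ≤ s.re) (hsb : s.re ≤ b) :
    ‖mellin f s‖ ≤ ‖mellin f a‖ + ‖mellin f b‖ := by
  have norm_cpow_smul (z : ℂ) {x : ℝ} (hx : x ∈ Ioi (0 : ℝ)) :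
      ‖(x : ℂ) ^ (z - 1) • f x‖ = x ^ (z.re - 1) * ‖f x‖ := by
    simp [Complex.norm_cpow_eq_rpow_re_of_pos hx]
  have integral_norm (c : ℝ) : ∫ x in Ioi (0 : ℝ), ‖(x : ℂ) ^ ((c : ℂ) - 1) • f x‖ =
      ‖mellin f c‖ := by
    have hmellin : mellin f c =
        ((∫ x in Ioi (0 : ℝ), ‖(x : ℂ) ^ ((c : ℂ) - 1) • f x‖ : ℝ) : ℂ) := by
      rw [mellin, ← integral_complex_ofReal]
      refine setIntegral_congr_fun measurableSet_Ioi fun x hx ↦ ?_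
      rw [norm_cpow_smul _ hx, smul_eq_mul, hf x hx, Complex.ofReal_mul,
        Complex.ofReal_cpow (le_of_lt hx)]
      simp
    rw [hmellin, Complex.norm_real, norm_of_nonneg (by positivity)]
  calc ‖mellin f s‖
      ≤ ∫ x in Ioi (0 : ℝ), (‖(x : ℂ) ^ ((a : ℂ) - 1) • f x‖ +
          ‖(x : ℂ) ^ ((b : ℂ) - 1) • f x‖) := by
        refine norm_integral_le_of_norm_le (ha.norm.add hb.norm) ?_
        filter_upwards [ae_restrict_mem measurableSet_Ioi] with x hx
        simp_rw [norm_cpow_smul _ hx, ← add_mul, Complex.ofReal_re]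
        gcongr
        rcases le_total x 1 with hx1 | hx1
        · exact (rpow_le_rpow_of_exponent_ge hx hx1 (by linarith)).trans
            (le_add_of_nonneg_right (rpow_nonneg (le_of_lt hx) _))
        · exact (rpow_le_rpow_of_exponent_le hx1 (by linarith)).trans
            (le_add_of_nonneg_left (rpow_nonneg (le_of_lt hx) _))
    _ = ‖mellin f a‖ + ‖mellin f b‖ := by
        rw [integral_add ha.norm hb.norm, integral_norm, integral_norm]

theorem one_le_evenKernel_zero {x : ℝ} (hx : 0 < x) : 1 ≤ HurwitzZeta.evenKernel 0 x := by
  refine sub_nonneg.1 (HasSum.nonneg (fun n ↦ ?_)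
    (by simpa using HurwitzZeta.hasSum_int_evenKernel₀ 0 hx))
  split_ifs <;> positivity

theorem inv_sqrt_le_evenKernel_zero {x : ℝ} (hx : 0 < x) :
    x ^ (-(1 / 2) : ℝ) ≤ HurwitzZeta.evenKernel 0 x := by
  rw [HurwitzZeta.evenKernel_functional_equation, ← HurwitzZeta.evenKernel_eq_cosKernel_of_zero,
    rpow_neg hx.le, one_div (x ^ _)]
  exact le_mul_of_one_le_right (by positivity) (one_le_evenKernel_zero (by positivity))

theorem hurwitzEvenFEPair_f_modif_eq_norm (x : ℝ) (hx : x ∈ Ioi (0 : ℝ)) :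
    (HurwitzZeta.hurwitzEvenFEPair 0).f_modif x =
      ‖(HurwitzZeta.hurwitzEvenFEPair 0).f_modif x‖ := by
  have hpow : (x : ℂ) ^ (-(1 / 2) : ℂ) = ((x ^ (-(1 / 2) : ℝ) : ℝ) : ℂ) := by
    rw [Complex.ofReal_cpow (le_of_lt hx)]
    simp
  suffices h : ∃ r : ℝ, 0 ≤ r ∧ (HurwitzZeta.hurwitzEvenFEPair 0).f_modif x = r by
    obtain ⟨r, hr, h⟩ := h
    rw [h, Complex.norm_real, norm_of_nonneg hr]
  rcases lt_trichotomy x 1 with hx1 | rfl | hx1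
  · refine ⟨_, sub_nonneg.2 (inv_sqrt_le_evenKernel_zero hx), ?_⟩
    simp [WeakFEPair.f_modif, HurwitzZeta.hurwitzEvenFEPair, indicator, hx1, hx1.not_gt,
      mem_Ioi.1 hx]
  · exact ⟨0, le_rfl, by simp [WeakFEPair.f_modif]⟩
  · refine ⟨_, sub_nonneg.2 (one_le_evenKernel_zero hx), ?_⟩
    simp [WeakFEPair.f_modif, HurwitzZeta.hurwitzEvenFEPair, indicator, hx1, hx1.not_gt]

theorem norm_completedRiemannZeta₀_le_add {a b : ℝ} {s : ℂ} (has : a ≤ s.re) (hsb : s.re ≤ b) :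
    ‖completedRiemannZeta₀ s‖ ≤ ‖completedRiemannZeta₀ a‖ + ‖completedRiemannZeta₀ b‖ := by
  have hconv (c : ℝ) : MellinConvergent (HurwitzZeta.hurwitzEvenFEPair 0).f_modif ((c / 2 : ℝ)) :=
    ((HurwitzZeta.hurwitzEvenFEPair 0).isStrongFEPair_toStrongFEPair.hasMellin _).1
  have key := norm_mellin_le_add hurwitzEvenFEPair_f_modif_eq_norm (hconv a) (hconv b)
    (s := s / 2) (by simpa using by linarith) (by simpa using by linarith)
  simp only [completedRiemannZeta₀, HurwitzZeta.completedHurwitzZetaEven₀, WeakFEPair.Λ₀, norm_div,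
    Complex.norm_ofNat, ← add_div]
  push_cast at key
  gcongr

/-- Riemann's `ξ` function `s (s - 1) π ^ (-s / 2) Γ(s / 2) ζ(s)`, written through the entire
function `Λ₀` so that the removable singularities at `0` and `1` do not show. -/
noncomputable def xi (s : ℂ) : ℂ := s * (s - 1) * completedRiemannZeta₀ s + 1

theorem differentiable_xi : Differentiable ℂ xi := by
  unfold xi
  have := differentiable_completedZeta₀
  fun_prop

theorem xi_one_sub (s : ℂ) : xi (1 - s) = xi s := by
  rw [xi, xi, completedRiemannZeta₀_one_sub]
  ring

theorem xi_eq_mul_riemannZeta {s : ℂ} (hs : 0 < s.re) (hs1 : s ≠ 1) :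
    xi s = s * (s - 1) * s.Gammaℝ * riemannZeta s := by
  have hs0 : s ≠ 0 := by
    rintro rfl
    simp at hs
  have h1s : (1 : ℂ) - s ≠ 0 := sub_ne_zero.2 hs1.symm
  rw [riemannZeta_def_of_ne_zero hs0, mul_assoc _ s.Gammaℝ,
    mul_div_cancel₀ _ (Complex.Gammaℝ_ne_zero_of_re_pos hs), completedRiemannZeta_eq, xi]
  field_simp
  ring

theorem norm_completedRiemannZeta₀_one_lt : ‖completedRiemannZeta₀ 1‖ < 4 / 3 := by
  have hlog : Complex.log (4 * π) = (log (4 * π) : ℝ) := by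
    rw [Complex.ofReal_log (by positivity)]
    simp
  have hlog_le : log (4 * π) ≤ 4 := by
    rw [log_le_iff_le_exp (by positivity), show (4 : ℝ) = 2 + 2 by norm_num, exp_add]
    have := add_one_le_exp (2 : ℝ)
    have := Real.exp_one_gt_d9
    have : exp 2 = exp 1 * exp 1 := by rw [← exp_add]; norm_num
    nlinarith [pi_lt_four]
  have hlog_pos : 0 < log (4 * π) := log_pos (by linarith [pi_gt_three])
  rw [completedRiemannZeta₀_one, hlog]
  norm_cast
  rw [norm_eq_abs, abs_lt]
  constructor <;>
    linarith [eulerMascheroniConstant_lt_two_thirds, one_half_lt_eulerMascheroniConstant]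

theorem xi_ofReal_ne_zero_of_le_one {x : ℝ} (hx0 : 0 ≤ x) (hx1 : x ≤ 1) : xi x ≠ 0 := by
  have hΛ : ‖completedRiemannZeta₀ x‖ < 8 / 3 := by
    have h := norm_completedRiemannZeta₀_le_add (s := x) hx0 hx1
    have h01 := completedRiemannZeta₀_one_sub 0
    rw [sub_zero] at h01
    rw [Complex.ofReal_zero, ← h01, Complex.ofReal_one] at h
    linarith [norm_completedRiemannZeta₀_one_lt]
  have hpoly : ‖(x : ℂ) * (x - 1)‖ ≤ 1 / 4 := by
    norm_cast
    rw [norm_eq_abs, abs_le]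
    constructor <;> nlinarith [sq_nonneg (x - 1 / 2)]
  intro h
  have hone : ‖(x : ℂ) * (x - 1) * completedRiemannZeta₀ x‖ = 1 := by
    rw [eq_neg_of_add_eq_zero_left h, norm_neg, norm_one]
  rw [norm_mul] at hone
  nlinarith [norm_nonneg ((x : ℂ) * (x - 1)), norm_nonneg (completedRiemannZeta₀ x)]

theorem xi_ne_zero_of_one_le_re {s : ℂ} (hs : 1 ≤ s.re) : xi s ≠ 0 := by
  rcases eq_or_ne s 1 with rfl | hs1
  · exact_mod_cast xi_ofReal_ne_zero_of_le_one zero_le_one le_rfl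
  have hs0 : s ≠ 0 := fun h ↦ by norm_num [h] at hs
  rw [xi_eq_mul_riemannZeta (by linarith) hs1]
  exact mul_ne_zero (mul_ne_zero (mul_ne_zero hs0 (sub_ne_zero.2 hs1))
    (Complex.Gammaℝ_ne_zero_of_re_pos (by linarith))) (riemannZeta_ne_zero_of_one_le_re hs)

theorem xi_ofReal_ne_zero {x : ℝ} (hx : 0 ≤ x) : xi x ≠ 0 := by
  rcases le_or_gt x 1 with h | h
  · exact xi_ofReal_ne_zero_of_le_one hx h
  · exact xi_ne_zero_of_one_le_re (by simpa using h.le)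

theorem hasSum_norm_riemannZeta_natCast {k : ℕ} (hk : 1 < k) :
    HasSum (fun n : ℕ ↦ 1 / (n : ℝ) ^ k) ‖riemannZeta k‖ := by
  have hsum : Summable fun n : ℕ ↦ 1 / (n : ℝ) ^ k := Real.summable_one_div_nat_pow.2 hk
  have hzeta : riemannZeta k = ((∑' n : ℕ, 1 / (n : ℝ) ^ k : ℝ) : ℂ) := by
    rw [zeta_nat_eq_tsum_of_gt_one hk]
    push_cast
    rfl
  rw [hzeta, Complex.norm_real, norm_of_nonneg (tsum_nonneg fun n ↦ by positivity)]
  exact hsum.hasSum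

theorem one_le_norm_riemannZeta_natCast {k : ℕ} (hk : 1 < k) : 1 ≤ ‖riemannZeta k‖ := by
  simpa using le_hasSum (hasSum_norm_riemannZeta_natCast hk) 1 fun n _ ↦ by positivity

theorem norm_riemannZeta_natCast_le_two {k : ℕ} (hk : 1 < k) : ‖riemannZeta k‖ ≤ 2 := by
  have hterm (n : ℕ) : 1 / (n : ℝ) ^ k ≤ 1 / (n : ℝ) ^ 2 := by
    rcases n.eq_zero_or_pos with rfl | hn
    · simp [show k ≠ 0 by omega]
    · have : (1 : ℝ) ≤ n := by exact_mod_cast hn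
      gcongr
      exact hk
  have := hasSum_le hterm (hasSum_norm_riemannZeta_natCast hk) hasSum_zeta_two
  nlinarith [pi_lt_d2, pi_pos]

theorem norm_Gammaℝ_two_mul_succ (n : ℕ) :
    ‖(2 * (n + 1) : ℂ).Gammaℝ‖ = n.factorial / π ^ (n + 1) := by
  have hexp : -(2 * ((n : ℂ) + 1)) / 2 = -((n + 1 : ℕ) : ℂ) := by push_cast; ring
  rw [Complex.Gammaℝ_def, hexp, mul_div_cancel_left₀ _ two_ne_zero, Complex.Gamma_nat_eq_factorial,
    Complex.cpow_neg, Complex.cpow_natCast]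
  simp [abs_of_pos pi_pos, div_eq_inv_mul]

theorem two_mul_succ_re_pos (n : ℕ) : 0 < (2 * (n + 1) : ℂ).re := by
  have : (0 : ℝ) < 2 * (n + 1) := by positivity
  simpa using this

theorem factorial_div_le_norm_xi (n : ℕ) :
    n.factorial / π ^ (n + 1) ≤ ‖xi (2 * (n + 1))‖ := by
  have hcast : (2 * (n + 1) : ℂ) = ((2 * (n + 1) : ℕ) : ℂ) := by push_cast; ring
  have hzeta : 1 ≤ ‖riemannZeta (2 * (n + 1))‖ := by
    rw [hcast]
    exact one_le_norm_riemannZeta_natCast (by omega)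
  have hne : (2 * (n + 1) : ℂ) ≠ 1 := by
    rw [hcast]
    exact_mod_cast (by omega : 2 * (n + 1) ≠ 1)
  have hpoly : 1 ≤ ‖(2 * (n + 1) : ℂ) * (2 * (n + 1) - 1)‖ := by
    have : (2 * (n + 1) : ℂ) * (2 * (n + 1) - 1) = ((2 * (n + 1) * (2 * n + 1) : ℕ) : ℂ) := by
      push_cast; ring
    rw [this, Complex.norm_natCast]
    exact_mod_cast Nat.succ_le_of_lt (by positivity)
  rw [xi_eq_mul_riemannZeta (two_mul_succ_re_pos n) hne, norm_mul, norm_mul,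
    norm_Gammaℝ_two_mul_succ]
  have : (0 : ℝ) ≤ n.factorial / π ^ (n + 1) := by positivity
  nlinarith [mul_le_mul hpoly hzeta zero_le_one (by positivity)]

theorem norm_completedRiemannZeta₀_two_mul_succ_le (n : ℕ) :
    ‖completedRiemannZeta₀ (2 * (n + 1))‖ ≤ 2 * n.factorial + 2 := by
  have hcast : (2 * (n + 1) : ℂ) = ((2 * (n + 1) : ℕ) : ℂ) := by push_cast; ring
  have hzeta : ‖riemannZeta (2 * (n + 1))‖ ≤ 2 := by
    rw [hcast]
    exact norm_riemannZeta_natCast_le_two (by omega)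
  have hne : (2 * (n + 1) : ℂ) ≠ 0 := by
    rw [hcast]
    exact_mod_cast (by omega : 2 * (n + 1) ≠ 0)
  have hGamma := Complex.Gammaℝ_ne_zero_of_re_pos (two_mul_succ_re_pos n)
  have hΛ : completedRiemannZeta₀ (2 * (n + 1)) =
      (2 * (n + 1) : ℂ).Gammaℝ * riemannZeta (2 * (n + 1)) +
        1 / (2 * (n + 1)) + 1 / (1 - 2 * (n + 1)) := by
    rw [riemannZeta_def_of_ne_zero hne, mul_div_cancel₀ _ hGamma, completedRiemannZeta_eq]
    ring
  have hpi : (n.factorial / π ^ (n + 1) : ℝ) ≤ n.factorial :=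
    div_le_self (by positivity) (one_le_pow₀ (by linarith [pi_gt_three]))
  have hmain : ‖(2 * (n + 1) : ℂ).Gammaℝ * riemannZeta (2 * (n + 1))‖ ≤ n.factorial * 2 := by
    rw [norm_mul, norm_Gammaℝ_two_mul_succ]
    gcongr
  have hinv : ‖1 / (2 * (n + 1) : ℂ)‖ ≤ 1 := by
    rw [hcast, norm_div, norm_one, Complex.norm_natCast]
    exact div_le_self zero_le_one (by exact_mod_cast (by omega : 1 ≤ 2 * (n + 1)))
  have hinv' : ‖1 / (1 - 2 * (n + 1) : ℂ)‖ ≤ 1 := by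
    rw [show (1 - 2 * (n + 1) : ℂ) = -((2 * n + 1 : ℕ) : ℂ) by push_cast; ring, norm_div, norm_one,
      norm_neg, Complex.norm_natCast]
    exact div_le_self zero_le_one (by exact_mod_cast (by omega : 1 ≤ 2 * n + 1))
  rw [hΛ]
  exact norm_add₃_le.trans (by linarith)

theorem norm_xi_le (n : ℕ) {z : ℂ} (hz : ‖z‖ ≤ n + 1) :
    ‖xi (1 / 2 + z)‖ ≤ 9 * (n + 2) ^ (n + 2) := by
  have hre := abs_le.1 ((Complex.abs_re_le_norm z).trans hz)
  have : (0 : ℝ) ≤ n := n.cast_nonneg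
  have hΛ : ‖completedRiemannZeta₀ (1 / 2 + z)‖ ≤ 2 * (2 * n.factorial + 2) := by
    have h := norm_completedRiemannZeta₀_le_add (a := 1 - 2 * (n + 1)) (b := 2 * (n + 1))
      (s := 1 / 2 + z) (by simp; linarith) (by simp; linarith)
    push_cast at h
    rw [completedRiemannZeta₀_one_sub] at h
    linarith [norm_completedRiemannZeta₀_two_mul_succ_le n]
  have hs : ‖1 / 2 + z‖ ≤ n + 2 := by
    have := norm_add_le (1 / 2) z
    norm_num at this ⊢
    linarith
  have hs1 : ‖1 / 2 + z - 1‖ ≤ n + 2 := by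
    have := norm_add_le (-(1 / 2)) z
    rw [show 1 / 2 + z - 1 = -(1 / 2) + z by ring]
    norm_num at this ⊢
    linarith
  have hfact : (n.factorial : ℝ) ≤ (n + 2) ^ n := by
    calc (n.factorial : ℝ) ≤ (n : ℝ) ^ n := by exact_mod_cast n.factorial_le_pow
      _ ≤ (n + 2) ^ n := by gcongr; linarith
  have hone : (1 : ℝ) ≤ (n + 2) ^ n := one_le_pow₀ (by linarith)
  calc ‖xi (1 / 2 + z)‖
      ≤ ‖1 / 2 + z‖ * ‖1 / 2 + z - 1‖ * ‖completedRiemannZeta₀ (1 / 2 + z)‖ + 1 := by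
        rw [← norm_mul, ← norm_mul]
        simpa only [xi, norm_one] using
          norm_add_le ((1 / 2 + z) * (1 / 2 + z - 1) * completedRiemannZeta₀ (1 / 2 + z)) 1
    _ ≤ (n + 2) * (n + 2) * (2 * (2 * (n + 2) ^ n + 2)) + 1 := by
        gcongr
        exact hΛ.trans (by gcongr)
    _ ≤ 9 * (n + 2) ^ (n + 2) := by
        rw [pow_add]
        nlinarith [mul_nonneg (mul_self_nonneg ((n : ℝ) + 2)) (sub_nonneg.2 hone),
          one_le_mul_of_one_le_of_one_le (show (1 : ℝ) ≤ n + 2 by linarith)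
          (show (1 : ℝ) ≤ n + 2 by linarith)]

theorem eventually_norm_xi_le_exp_sq {ε : ℝ} (hε : 0 < ε) :
    ∀ᶠ R : ℝ in atTop, ∀ z, ‖z‖ ≤ R → ‖xi (1 / 2 + z)‖ ≤ exp (ε * R ^ 2) := by
  have hlog := Real.isLittleO_log_id_atTop.bound (show 0 < ε / 8 by positivity)
  have hshift : Tendsto (fun R : ℝ ↦ R + 2) atTop atTop :=
    tendsto_atTop_add_const_right _ _ tendsto_id
  filter_upwards [eventually_ge_atTop 2, hshift.eventually hlog,
    eventually_ge_atTop (2 * log 9 / ε)] with R hR hlogR hR9 z hz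
  simp only [id, norm_eq_abs, abs_of_nonneg (log_nonneg (show 1 ≤ R + 2 by linarith)),
    abs_of_nonneg (show 0 ≤ R + 2 by linarith)] at hlogR
  set n := ⌊R⌋₊
  have hnR : (n : ℝ) ≤ R := Nat.floor_le (by linarith)
  have hlog9 : 2 * log 9 ≤ R * ε := (div_le_iff₀ hε).1 hR9
  refine (norm_xi_le n (hz.trans (Nat.lt_floor_add_one R).le)).trans ?_
  rw [← log_le_iff_le_exp (by positivity), log_mul (by norm_num) (by positivity), log_pow]
  have hlog_le : log (n + 2) ≤ log (R + 2) := log_le_log (by positivity) (by linarith)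
  have hlog_nonneg : 0 ≤ log ((n : ℝ) + 2) := log_nonneg (by linarith [n.cast_nonneg (α := ℝ)])
  push_cast
  calc log 9 + (n + 2) * log (n + 2) ≤ R * ε / 2 + (R + 2) * (ε / 8 * (R + 2)) := by
        gcongr
        · linarith
        · exact hlog_le.trans hlogR
    _ ≤ ε * R ^ 2 := by nlinarith [mul_nonneg hε.le (sub_nonneg.2 hR)]

section HadamardProduct

theorem analyticOrderAt_ne_top {f : ℂ → ℂ} (hf : Differentiable ℂ f) {z₀ : ℂ} (h₀ : f z₀ ≠ 0)
    (a : ℂ) : analyticOrderAt f a ≠ ⊤ := fun h ↦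
  have hA : AnalyticOnNhd ℂ f univ := fun z _ ↦ hf.analyticAt z
  h₀ (hA.eqOn_zero_of_preconnected_of_eventuallyEq_zero isPreconnected_univ (mem_univ a)
    (analyticOrderAt_eq_top.1 h) (mem_univ z₀))

theorem finite_inter_zeros {f : ℂ → ℂ} (hf : Differentiable ℂ f) {z₀ : ℂ} (h₀ : f z₀ ≠ 0)
    {K : Set ℂ} (hK : IsCompact K) : (K ∩ {z | f z = 0}).Finite := by
  have hA : AnalyticOnNhd ℂ f univ := fun z _ ↦ hf.analyticAt z
  have hdiscrete : IsDiscrete {z | f z = 0} := by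
    simpa [compl_ofPred, preimage] using
      (mem_codiscrete'.1 (hA.preimage_zero_mem_codiscrete h₀)).2
  exact (hK.inter_right (isClosed_eq hf.continuous continuous_const)).finite
    (hdiscrete.mono inter_subset_right)

theorem exists_eq_one_sub_div_pow_mul {f : ℂ → ℂ} (hf : Differentiable ℂ f) {a : ℂ} (ha : a ≠ 0)
    (htop : analyticOrderAt f a ≠ ⊤) :
    ∃ g : ℂ → ℂ, Differentiable ℂ g ∧
      (∀ z, f z = (1 - z / a) ^ analyticOrderNatAt f a * g z) ∧ g a ≠ 0 := by
  obtain ⟨k, hk, hka, hfk⟩ := ((hf.analyticAt a).analyticOrderNatAt_eq_iff htop).1 rfl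
  set n := analyticOrderNatAt f a
  have hzero {z : ℂ} (hz : z ≠ a) : (1 - z / a) ^ n ≠ 0 :=
    pow_ne_zero _ (sub_ne_zero.2 fun h ↦ hz ((div_eq_one_iff_eq ha).1 h.symm))
  have hsub (z : ℂ) : (z - a) ^ n = (1 - z / a) ^ n * (-a) ^ n := by
    rw [← mul_pow]
    congr 1
    field_simp
    ring
  classical
  let g : ℂ → ℂ := Function.update (fun z ↦ f z / (1 - z / a) ^ n) a ((-a) ^ n * k a)
  have hg_of_ne {z : ℂ} (hz : z ≠ a) : g z = f z / (1 - z / a) ^ n := Function.update_of_ne hz ..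
  have hg_self : g a = (-a) ^ n * k a := Function.update_self ..
  refine ⟨g, fun z ↦ ?_, fun z ↦ ?_, ?_⟩
  · rcases eq_or_ne z a with rfl | hz
    · refine (hk.differentiableAt.const_mul ((-z) ^ n)).congr_of_eventuallyEq ?_
      filter_upwards [hfk] with w hw
      rcases eq_or_ne w z with rfl | hwz
      · exact hg_self
      · rw [hg_of_ne hwz, hw, smul_eq_mul, hsub, mul_assoc, mul_div_cancel_left₀ _ (hzero hwz)]
    · have hgz : g =ᶠ[𝓝 z] fun w ↦ f w / (1 - w / a) ^ n := by
        filter_upwards [isOpen_ne.mem_nhds hz] with w hw using hg_of_ne hw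
      exact ((hf z).div (by fun_prop) (hzero hz)).congr_of_eventuallyEq hgz
  · rcases eq_or_ne z a with rfl | hz
    · rw [hg_self, hfk.self_of_nhds, smul_eq_mul, hsub, mul_assoc]
    · rw [hg_of_ne hz, mul_div_cancel₀ _ (hzero hz)]
  · rw [hg_self]
    exact mul_ne_zero (pow_ne_zero _ (neg_ne_zero.2 ha)) hka

theorem exists_eq_prod_one_sub_div_pow_mul {f : ℂ → ℂ} (hf : Differentiable ℂ f) {z₀ : ℂ}
    (h₀ : f z₀ ≠ 0) (Z : Finset ℂ) (hZ : 0 ∉ Z) :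
    ∃ g : ℂ → ℂ, Differentiable ℂ g ∧
      (∀ z, f z = (∏ a ∈ Z, (1 - z / a) ^ analyticOrderNatAt f a) * g z) ∧ ∀ a ∈ Z, g a ≠ 0 := by
  classical
  induction Z using Finset.induction_on with
  | empty => exact ⟨f, hf, by simp, by simp⟩
  | insert a Z ha ih =>
    obtain ⟨ha0, hZ0⟩ : 0 ≠ a ∧ 0 ∉ Z := by simpa using hZ
    obtain ⟨g, hg, hfg, hgZ⟩ := ih hZ0
    set P : ℂ → ℂ := fun z ↦ ∏ b ∈ Z, (1 - z / b) ^ analyticOrderNatAt f b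
    have hg₀ : g z₀ ≠ 0 := fun h ↦ h₀ (by rw [hfg, h, mul_zero])
    have hP : AnalyticAt ℂ P a := (by fun_prop : Differentiable ℂ P).analyticAt a
    have hPa : P a ≠ 0 := Finset.prod_ne_zero_iff.2 fun b hb ↦ pow_ne_zero _ <| sub_ne_zero.2
      fun h ↦ ha <| (div_eq_one_iff_eq fun hb0 : b = 0 ↦ hZ0 (hb0 ▸ hb)).1 h.symm ▸ hb
    have horder : analyticOrderNatAt f a = analyticOrderNatAt g a := by
      rw [analyticOrderNatAt, show f = P * g from funext hfg, analyticOrderAt_mul hP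
        (hg.analyticAt a), hP.analyticOrderAt_eq_zero.2 hPa, zero_add, analyticOrderNatAt]
    obtain ⟨h, hh, hgh, hha⟩ :=
      exists_eq_one_sub_div_pow_mul hg ha0.symm (analyticOrderAt_ne_top hg hg₀ a)
    refine ⟨h, hh, fun z ↦ ?_, ?_⟩
    · rw [Finset.prod_insert ha, horder, hfg z, hgh z, mul_left_comm, mul_assoc]
    · simp only [Finset.forall_mem_insert]
      exact ⟨hha, fun b hb h0 ↦ hgZ b hb (by rw [hgh, h0, mul_zero])⟩

theorem exists_log_of_ne_zero_on_ball {g : ℂ → ℂ} (hg : Differentiable ℂ g) {R : ℝ} (hR : 0 < R)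
    (hne : ∀ z ∈ ball (0 : ℂ) R, g z ≠ 0) :
    ∃ L : ℂ → ℂ, L 0 = 0 ∧ (∀ z ∈ ball (0 : ℂ) R, HasDerivAt L (deriv g z / g z) z) ∧
      ∀ z ∈ ball (0 : ℂ) R, g z = g 0 * Complex.exp (L z) := by
  have hlogDeriv : DifferentiableOn ℂ (fun z ↦ deriv g z / g z) (ball 0 R) := fun z hz ↦
    ((hg.analyticAt z).deriv.differentiableAt.div (hg z) (hne z hz)).differentiableWithinAt
  obtain ⟨L, hL0, hL⟩ := hlogDeriv.isExactOn_ball.with_val_at 0 0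
  refine ⟨L, hL0, hL, fun z hz ↦ ?_⟩
  have hquot (w : ℂ) (hw : w ∈ ball (0 : ℂ) R) :
      HasDerivAt (fun w ↦ g w * Complex.exp (-L w)) 0 w := by
    refine ((hg w).hasDerivAt.mul (hL w hw).neg.cexp).congr_deriv ?_
    have := hne w hw
    field_simp
    ring
  have hconst := isOpen_ball.is_const_of_deriv_eq_zero isPreconnected_ball
    (fun w hw ↦ (hquot w hw).differentiableAt.differentiableWithinAt)
    (fun w hw ↦ (hquot w hw).deriv) hz (mem_ball_self hR)
  simp only [hL0, neg_zero, Complex.exp_zero, mul_one] at hconst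
  rw [← hconst, mul_assoc, ← Complex.exp_add, neg_add_cancel, Complex.exp_zero, mul_one]

/- Borel–Carathéodory bounds the logarithm on the half ball; as its derivative vanishes at `0`, the
Schwarz lemma then gains a second power of `‖w‖ / R`. -/
theorem exists_eq_mul_exp_of_deriv_eq_zero {g : ℂ → ℂ} (hg : Differentiable ℂ g) {R M : ℝ}
    (hR : 0 < R) (hM : 0 < M) (hne : ∀ z ∈ ball (0 : ℂ) R, g z ≠ 0)
    (hbound : ∀ z ∈ ball (0 : ℂ) R, ‖g z‖ ≤ ‖g 0‖ * exp M) (hderiv : deriv g 0 = 0) {w : ℂ}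
    (hw : ‖w‖ < R / 2) :
    ∃ l : ℂ, ‖l‖ ≤ 8 * M * (‖w‖ / R) ^ 2 ∧ g w = g 0 * Complex.exp l := by
  obtain ⟨L, hL0, hL, hgL⟩ := exists_log_of_ne_zero_on_ball hg hR hne
  have hd : DifferentiableOn ℂ L (ball 0 R) := fun z hz ↦
    (hL z hz).differentiableAt.differentiableWithinAt
  have hre : MapsTo L (ball 0 R) {z | z.re ≤ M} := fun z hz ↦ by
    have h := hbound z hz
    rw [hgL z hz, norm_mul, Complex.norm_exp] at h
    exact exp_le_exp.1 (le_of_mul_le_mul_left h (norm_pos_iff.2 (hne 0 (mem_ball_self hR))))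
  have hhalf : ball (0 : ℂ) (R / 2) ⊆ ball 0 R := ball_subset_ball (by linarith)
  have hmaps : MapsTo L (ball 0 (R / 2)) (closedBall (L 0) (2 * M)) := fun z hz ↦ by
    rw [mem_closedBall, hL0, dist_zero_right]
    refine (Complex.borelCaratheodory_zero hM hd hre hR (hhalf hz) hL0).trans ?_
    rw [mem_ball_zero_iff] at hz
    rw [div_le_iff₀ (by linarith)]
    nlinarith
  have hlittle : (L · - L 0) =o[𝓝 0] fun w : ℂ ↦ ‖w - 0‖ ^ 1 := by
    have h := (hL 0 (mem_ball_self hR)).isLittleO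
    simpa [hderiv] using h.norm_right
  have hwR : w ∈ ball (0 : ℂ) (R / 2) := mem_ball_zero_iff.2 hw
  refine ⟨L w, ?_, hgL w (hhalf hwR)⟩
  have h :=
    Complex.dist_le_mul_div_pow_of_mapsTo_ball_of_isLittleO (hd.mono hhalf) hmaps hlittle hwR
  rw [hL0, dist_zero_right, dist_zero_right] at h
  refine h.trans_eq ?_
  rw [div_div_eq_mul_div, mul_div_right_comm, mul_pow]
  ring

variable {f : ℂ → ℂ}

theorem prod_one_sub_div_pow_neg (heven : ∀ z, f (-z) = f z)
    {Z : Finset ℂ} (hZ : ∀ a ∈ Z, -a ∈ Z) (z : ℂ) :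
    ∏ a ∈ Z, (1 - -z / a) ^ analyticOrderNatAt f a =
      ∏ a ∈ Z, (1 - z / a) ^ analyticOrderNatAt f a := by
  have horder (a : ℂ) : analyticOrderNatAt f (-a) = analyticOrderNatAt f a := by
    have hcomp := analyticOrderAt_comp_of_deriv_ne_zero (f := f) (g := fun z ↦ -z) (z₀ := a)
      (by fun_prop) (by simp)
    rw [show f ∘ (fun z ↦ -z) = f from funext heven] at hcomp
    rw [analyticOrderNatAt, analyticOrderNatAt, hcomp]
  refine Finset.prod_nbij' (-·) (-·) hZ hZ (by simp) (by simp) fun a _ ↦ ?_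
  rw [horder, neg_div, div_neg]

theorem deriv_eq_zero_of_even_mul (heven : ∀ z, f (-z) = f z) {P g : ℂ → ℂ}
    (hP : ContinuousAt P 0) (hPeven : ∀ z, P (-z) = P z) (hP0 : P 0 ≠ 0)
    (hfg : ∀ z, f z = P z * g z) : deriv g 0 = 0 := by
  have hg : g =ᶠ[𝓝 0] fun z ↦ f z / P z := by
    filter_upwards [hP.eventually_ne hP0] with z hz
    rw [hfg, mul_div_cancel_left₀ _ hz]
  have hneg : deriv (fun z ↦ f (-z) / P (-z)) 0 = -deriv (fun z ↦ f z / P z) 0 := by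
    rw [deriv_comp_neg (f := fun z ↦ f z / P z), neg_zero]
  simp only [heven, hPeven] at hneg
  rw [hg.deriv_eq]
  exact self_eq_neg.1 hneg

theorem norm_le_of_eq_prod_one_sub_div_pow_mul {g : ℂ → ℂ} (hg : Differentiable ℂ g) {Z : Finset ℂ}
    {R B : ℝ} (hR : 0 < R) (hZ : ∀ a ∈ Z, ‖a‖ ≤ R)
    (hbound : ∀ z, ‖z‖ ≤ 2 * R → ‖f z‖ ≤ B) {n : ℂ → ℕ}
    (hfg : ∀ z, f z = (∏ a ∈ Z, (1 - z / a) ^ n a) * g z) {z : ℂ} (hz : ‖z‖ ≤ 2 * R) :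
    ‖g z‖ ≤ B := by
  refine Complex.norm_le_of_forall_mem_frontier_norm_le (U := ball 0 (2 * R)) isBounded_ball
    hg.diffContOnCl (fun w hw ↦ ?_) (by
      rwa [closure_ball _ (by positivity), mem_closedBall_zero_iff])
  rw [frontier_ball _ (by positivity), mem_sphere_zero_iff_norm] at hw
  have hfactor (a : ℂ) (ha : a ∈ Z) : 1 ≤ ‖1 - w / a‖ := by
    rcases eq_or_ne a 0 with rfl | ha0
    · simp
    have hquot : 2 ≤ ‖w / a‖ := by
      rw [norm_div, hw, le_div_iff₀ (norm_pos_iff.2 ha0)]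
      linarith [hZ a ha]
    have := norm_sub_norm_le (w / a) 1
    rw [norm_sub_rev, norm_one] at this
    linarith
  have hprod : 1 ≤ ‖∏ a ∈ Z, (1 - w / a) ^ n a‖ := by
    rw [norm_prod]
    exact Finset.one_le_prod fun a ha ↦ by
      rw [norm_pow]
      exact one_le_pow₀ (hfactor a ha)
  calc ‖g w‖ ≤ ‖∏ a ∈ Z, (1 - w / a) ^ n a‖ * ‖g w‖ :=
        le_mul_of_one_le_left (norm_nonneg _) hprod
    _ ≤ B := by
        rw [← norm_mul, ← hfg]
        exact hbound w hw.le

theorem exists_eq_prod_mul_exp (hf : Differentiable ℂ f) (heven : ∀ z, f (-z) = f z)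
    (h0 : f 0 ≠ 0) {R M : ℝ} (hR : 0 < R) (hM : 0 < M)
    (hbound : ∀ z, ‖z‖ ≤ 2 * R → ‖f z‖ ≤ ‖f 0‖ * exp M) {Z : Finset ℂ}
    (hZ : ∀ a, a ∈ Z ↔ ‖a‖ ≤ R ∧ f a = 0) {w : ℂ} (hw : ‖w‖ < R / 2) :
    ∃ l : ℂ, ‖l‖ ≤ 8 * M * (‖w‖ / R) ^ 2 ∧
      f w = (∏ a ∈ Z, (1 - w / a) ^ analyticOrderNatAt f a) * (f 0 * Complex.exp l) := by
  obtain ⟨g, hg, hfg, hgZ⟩ := exists_eq_prod_one_sub_div_pow_mul hf h0 Z fun h ↦ h0 ((hZ 0).1 h).2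
  have hg0 : g 0 = f 0 := by simp [hfg 0]
  have hne (z : ℂ) (hz : z ∈ ball (0 : ℂ) R) : g z ≠ 0 := fun h ↦
    hgZ z ((hZ z).2 ⟨(mem_ball_zero_iff.1 hz).le, by rw [hfg, h, mul_zero]⟩) h
  have hgbound (z : ℂ) (hz : z ∈ ball (0 : ℂ) R) : ‖g z‖ ≤ ‖g 0‖ * exp M := by
    rw [hg0]
    exact norm_le_of_eq_prod_one_sub_div_pow_mul hg hR (fun a ha ↦ ((hZ a).1 ha).1) hbound hfg
      (by linarith [mem_ball_zero_iff.1 hz])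
  have hZneg (a : ℂ) (ha : a ∈ Z) : -a ∈ Z := by
    rwa [hZ, norm_neg, heven, ← hZ]
  have hderiv : deriv g 0 = 0 :=
    deriv_eq_zero_of_even_mul heven (by fun_prop) (prod_one_sub_div_pow_neg heven hZneg) (by simp)
      hfg
  obtain ⟨l, hl, hgl⟩ := exists_eq_mul_exp_of_deriv_eq_zero hg hR hM hne hgbound hderiv hw
  exact ⟨l, hl, by rw [hfg w, hgl, hg0]⟩

theorem tendsto_prod_one_sub_div_pow (hf : Differentiable ℂ f) (heven : ∀ z, f (-z) = f z)
    (h0 : f 0 ≠ 0)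
    (hgrowth : ∀ ε > 0, ∀ᶠ R : ℝ in atTop, ∀ z, ‖z‖ ≤ R → ‖f z‖ ≤ exp (ε * R ^ 2))
    {Z : ℝ → Finset ℂ} (hZ : ∀ R a, a ∈ Z R ↔ ‖a‖ ≤ R ∧ f a = 0) (w : ℂ) :
    Tendsto (fun R ↦ ∏ a ∈ Z R, (1 - w / a) ^ analyticOrderNatAt f a) atTop (𝓝 (f w / f 0)) := by
  have key {ε : ℝ} (hε : 0 < ε) : ∀ᶠ R in atTop, ∃ l : ℂ, ‖l‖ ≤ ε ∧
      ∏ a ∈ Z R, (1 - w / a) ^ analyticOrderNatAt f a = f w / f 0 * Complex.exp (-l) := by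
    obtain ⟨δ, hδ, hδε⟩ : ∃ δ > 0, 40 * δ * ‖w‖ ^ 2 ≤ ε :=
      ⟨ε / (40 * (‖w‖ ^ 2 + 1)), by positivity, by field_simp; nlinarith⟩
    have hlog : ∀ᶠ R : ℝ in atTop, -log ‖f 0‖ ≤ δ * R ^ 2 :=
      ((tendsto_pow_atTop two_ne_zero).const_mul_atTop hδ).eventually_ge_atTop _
    filter_upwards [(tendsto_id.const_mul_atTop two_pos).eventually (hgrowth δ hδ), hlog,
      eventually_gt_atTop (2 * ‖w‖), eventually_gt_atTop 0] with R hgrowthR hlogR hwR hR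
    have hbound (z : ℂ) (hz : ‖z‖ ≤ 2 * R) : ‖f z‖ ≤ ‖f 0‖ * exp (5 * δ * R ^ 2) := by
      refine (hgrowthR z hz).trans ?_
      rw [← exp_log (norm_pos_iff.2 h0), ← exp_add, exp_le_exp, id]
      linarith
    obtain ⟨l, hl, hfl⟩ := exists_eq_prod_mul_exp hf heven h0 hR (by positivity) hbound (hZ R)
      (w := w) (by linarith)
    refine ⟨l, hl.trans (le_trans (le_of_eq ?_) hδε), ?_⟩
    · field_simp
      ring
    · rw [hfl, Complex.exp_neg]
      field_simp
  have hcont : Tendsto (fun l : ℂ ↦ f w / f 0 * Complex.exp (-l)) (𝓝 0) (𝓝 (f w / f 0)) := by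
    have : Continuous fun l : ℂ ↦ f w / f 0 * Complex.exp (-l) := by fun_prop
    simpa using this.tendsto 0
  refine tendsto_def.2 fun U hU ↦ ?_
  obtain ⟨ε, hε, hεU⟩ := nhds_basis_closedBall.mem_iff.1 (hcont hU)
  filter_upwards [key hε] with R ⟨l, hl, hprod⟩
  rw [mem_preimage, hprod]
  exact hεU (mem_closedBall_zero_iff.2 hl)

end HadamardProduct

section ZeroCounting

theorem hasSum_of_tendsto_sum_of_nonneg {ι α : Type*} {l : Filter α} [l.NeBot] {g : ι → ℝ}
    (hg : ∀ i, 0 ≤ g i) {S : α → Finset ι} (hS : ∀ i, g i ≠ 0 → ∀ᶠ x in l, i ∈ S x) {b : ℝ}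
    (hb : Tendsto (fun x ↦ ∑ i ∈ S x, g i) l (𝓝 b)) : HasSum g b := by
  classical
  refine hasSum_of_isLUB_of_nonneg b hg ⟨?_, fun u hu ↦
    le_of_tendsto' hb fun x ↦ hu (mem_range_self (S x))⟩
  rintro _ ⟨s, rfl⟩
  have hsub : ∀ᶠ x in l, ∀ i ∈ s, g i ≠ 0 → i ∈ S x :=
    (Finset.eventually_all s).2 fun i _ ↦ eventually_imp_distrib_left.2 (hS i)
  refine ge_of_tendsto hb (hsub.mono fun x hx ↦ ?_)
  simp only [← Finset.sum_filter_ne_zero s]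
  exact Finset.sum_le_sum_of_subset_of_nonneg (fun i hi ↦ hx i (Finset.mem_filter.1 hi).1
    (Finset.mem_filter.1 hi).2) fun i _ _ ↦ hg i

theorem hasDerivAt_neg_log_one_add_sq_div_sq (σ : ℝ) {t : ℝ} (ht : 0 < t) :
    HasDerivAt (fun t ↦ -log (1 + σ ^ 2 / t ^ 2)) (2 * σ ^ 2 / (t * (t ^ 2 + σ ^ 2))) t := by
  have hinner := ((hasDerivAt_pow 2 t).inv (by positivity)).const_mul (σ ^ 2) |>.const_add 1
  have hpos : 0 < 1 + σ ^ 2 / t ^ 2 := by positivity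
  refine (hinner.log hpos.ne').neg.congr_deriv ?_
  simp only [Pi.inv_apply]
  field_simp
  ring

theorem integrableOn_and_integral_eq_log (σ : ℝ) {γ : ℝ} (hγ : 0 < γ) :
    IntegrableOn (fun t ↦ 2 * σ ^ 2 / (t * (t ^ 2 + σ ^ 2))) (Ioi γ) ∧
      ∫ t in Ioi γ, 2 * σ ^ 2 / (t * (t ^ 2 + σ ^ 2)) = log (1 + σ ^ 2 / γ ^ 2) := by
  have hderiv (t : ℝ) (ht : t ∈ Ici γ) := hasDerivAt_neg_log_one_add_sq_div_sq σ (hγ.trans_le ht)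
  have hnonneg (t : ℝ) (ht : t ∈ Ioi γ) : 0 ≤ 2 * σ ^ 2 / (t * (t ^ 2 + σ ^ 2)) := by
    have : 0 < t := hγ.trans ht
    positivity
  have hlim : Tendsto (fun t : ℝ ↦ -log (1 + σ ^ 2 / t ^ 2)) atTop (𝓝 0) := by
    have h : Tendsto (fun t : ℝ ↦ 1 + σ ^ 2 / t ^ 2) atTop (𝓝 (1 + 0)) :=
      ((tendsto_pow_atTop two_ne_zero).const_div_atTop (σ ^ 2)).const_add 1
    simpa using (h.log (by norm_num)).neg
  refine ⟨integrableOn_Ioi_deriv_of_nonneg' hderiv hnonneg hlim, ?_⟩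
  rw [integral_Ioi_of_hasDerivAt_of_nonneg' hderiv hnonneg hlim]
  ring

theorem integrableOn_and_integral_sq_div {σ : ℝ} (hσ : 0 < σ) :
    IntegrableOn (fun t ↦ 2 * σ ^ 2 / (t ^ 2 + σ ^ 2)) (Ioi 0) ∧
      ∫ t in Ioi 0, 2 * σ ^ 2 / (t ^ 2 + σ ^ 2) = π * σ := by
  have hderiv (t : ℝ) (_ : t ∈ Ici (0 : ℝ)) :
      HasDerivAt (fun t ↦ 2 * σ * arctan (t / σ)) (2 * σ ^ 2 / (t ^ 2 + σ ^ 2)) t := by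
    refine (((hasDerivAt_id t).div_const σ).arctan.const_mul (2 * σ)).congr_deriv ?_
    simp only [id]
    field_simp
    ring
  have hnonneg (t : ℝ) (_ : t ∈ Ioi (0 : ℝ)) : 0 ≤ 2 * σ ^ 2 / (t ^ 2 + σ ^ 2) := by positivity
  have hlim : Tendsto (fun t ↦ 2 * σ * arctan (t / σ)) atTop (𝓝 (2 * σ * (π / 2))) :=
    ((tendsto_nhds_of_tendsto_nhdsWithin tendsto_arctan_atTop).comp
      (tendsto_id.atTop_div_const hσ)).const_mul _
  refine ⟨integrableOn_Ioi_deriv_of_nonneg' hderiv hnonneg hlim, ?_⟩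
  rw [integral_Ioi_of_hasDerivAt_of_nonneg' hderiv hnonneg hlim, zero_div, arctan_zero]
  ring

theorem sum_mul_log_one_add_sq_div_sq_le {S : Finset ℝ} (hS : ∀ γ ∈ S, 0 < γ) {w : ℝ → ℝ} {K : ℝ}
    (hK : ∀ T > 0, ∑ γ ∈ S with γ ≤ T, w γ ≤ K * T) {σ : ℝ} (hσ : 0 < σ) :
    ∑ γ ∈ S, w γ * log (1 + σ ^ 2 / γ ^ 2) ≤ K * (π * σ) := by
  set h : ℝ → ℝ := fun t ↦ 2 * σ ^ 2 / (t * (t ^ 2 + σ ^ 2))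
  have hint (γ : ℝ) (hγ : γ ∈ S) :
      IntegrableOn (fun t ↦ w γ * (Ici γ).indicator h t) (Ioi 0) :=
    (((integrableOn_Ici_iff_integrableOn_Ioi (by finiteness)).2
      (integrableOn_and_integral_eq_log σ (hS γ hγ)).1).integrable_indicator
        measurableSet_Ici).integrableOn.const_mul _
  have hterm (γ : ℝ) (hγ : γ ∈ S) : w γ * log (1 + σ ^ 2 / γ ^ 2) =
      ∫ t in Ioi 0, w γ * (Ici γ).indicator h t := by
    rw [integral_const_mul, setIntegral_indicator measurableSet_Ici,
      inter_eq_right.2 (Ici_subset_Ioi.2 (hS γ hγ)), integral_Ici_eq_integral_Ioi,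
      (integrableOn_and_integral_eq_log σ (hS γ hγ)).2]
  calc ∑ γ ∈ S, w γ * log (1 + σ ^ 2 / γ ^ 2)
      = ∫ t in Ioi 0, ∑ γ ∈ S, w γ * (Ici γ).indicator h t := by
        rw [integral_finsetSum _ hint, Finset.sum_congr rfl hterm]
    _ ≤ ∫ t in Ioi 0, K * (2 * σ ^ 2 / (t ^ 2 + σ ^ 2)) := by
        refine setIntegral_mono_on (integrable_finsetSum _ hint)
          ((integrableOn_and_integral_sq_div hσ).1.const_mul _) measurableSet_Ioi fun t ht ↦ ?_
        have hsum : ∑ γ ∈ S, w γ * (Ici γ).indicator h t = (∑ γ ∈ S with γ ≤ t, w γ) * h t := by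
          simp [Finset.sum_mul, Finset.sum_filter, indicator]
        have ht : 0 < t := ht
        calc ∑ γ ∈ S, w γ * (Ici γ).indicator h t ≤ K * t * h t := by
              rw [hsum]
              exact mul_le_mul_of_nonneg_right (hK t ht) (by positivity)
          _ = K * (2 * σ ^ 2 / (t ^ 2 + σ ^ 2)) := by
              simp only [h]
              field_simp
    _ = K * (π * σ) := by
        rw [integral_const_mul, (integrableOn_and_integral_sq_div hσ).2]

theorem norm_one_sub_div_mul_I_sq (σ γ : ℝ) : ‖1 - (σ : ℂ) / (γ * I)‖ ^ 2 = 1 + σ ^ 2 / γ ^ 2 := by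
  have : 1 - (σ : ℂ) / (γ * I) = ((1 : ℝ) : ℂ) + ((σ / γ : ℝ) : ℂ) * I := by
    push_cast
    rw [← div_div, Complex.div_I]
    ring
  rw [this, Complex.sq_norm, Complex.normSq_add_mul_I, div_pow, one_pow]

theorem two_mul_log_norm_prod_one_sub_div_mul_I (S : Finset ℝ) (n : ℝ → ℕ) (σ : ℝ) :
    2 * log ‖∏ γ ∈ S, (1 - (σ : ℂ) / (γ * I)) ^ n γ‖ =
      ∑ γ ∈ S, n γ * log (1 + σ ^ 2 / γ ^ 2) := by
  have hpos (γ : ℝ) : 0 < 1 + σ ^ 2 / γ ^ 2 := by positivity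
  have hne (γ : ℝ) : ‖1 - (σ : ℂ) / (γ * I)‖ ≠ 0 := fun h ↦ by
    have := norm_one_sub_div_mul_I_sq σ γ
    rw [h] at this
    linarith [hpos γ]
  rw [norm_prod, log_prod fun γ _ ↦ by rw [norm_pow]; exact pow_ne_zero _ (hne γ), Finset.mul_sum]
  refine Finset.sum_congr rfl fun γ _ ↦ ?_
  rw [← norm_one_sub_div_mul_I_sq, norm_pow, log_pow, log_pow]
  push_cast
  ring

theorem xi_one_half_ne_zero : xi (1 / 2) ≠ 0 := by
  simpa using xi_ofReal_ne_zero (x := 1 / 2) (by norm_num)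

theorem xi_one_half_add_neg (z : ℂ) : xi (1 / 2 + -z) = xi (1 / 2 + z) := by
  rw [← xi_one_sub]
  ring_nf

/-- The multiplicity of `1 / 2 + i γ` as a zero of `ξ` (hence of `ζ`); it is `0` at the other
points. -/
noncomputable def zeroMult (γ : ℝ) : ℕ := analyticOrderNatAt xi (1 / 2 + γ * I)

theorem analyticOrderNatAt_xi_comp_add (γ : ℝ) :
    analyticOrderNatAt (fun z ↦ xi (1 / 2 + z)) (γ * I) = zeroMult γ := by
  have h := analyticOrderAt_comp_of_deriv_ne_zero (f := xi) (g := fun z ↦ 1 / 2 + z) (z₀ := γ * I)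
    (by fun_prop) (by simp)
  exact congrArg ENat.toNat h

theorem xi_eq_zero_of_zeroMult_ne_zero {γ : ℝ} (h : zeroMult γ ≠ 0) : xi (1 / 2 + γ * I) = 0 :=
  apply_eq_zero_of_analyticOrderNatAt_ne_zero h

theorem zeroMult_zero : zeroMult 0 = 0 := by
  by_contra h
  exact xi_one_half_ne_zero (by simpa using xi_eq_zero_of_zeroMult_ne_zero h)

theorem zeroMult_neg (γ : ℝ) : zeroMult (-γ) = zeroMult γ := by
  have h := analyticOrderAt_comp_of_deriv_ne_zero (f := fun z ↦ xi (1 / 2 + z)) (g := fun z ↦ -z)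
    (z₀ := γ * I) (by fun_prop) (by simp)
  have heven : (fun z ↦ xi (1 / 2 + z)) ∘ (fun z ↦ -z) = fun z ↦ xi (1 / 2 + z) :=
    funext xi_one_half_add_neg
  rw [heven] at h
  rw [← analyticOrderNatAt_xi_comp_add, ← analyticOrderNatAt_xi_comp_add, analyticOrderNatAt,
    analyticOrderNatAt, h]
  push_cast
  rw [neg_mul]

theorem exists_pos_forall_abs_lt_zeroMult_eq_zero :
    ∃ γ₀ > 0, ∀ γ : ℝ, |γ| < γ₀ → zeroMult γ = 0 := by
  have hcont : Continuous fun γ : ℝ ↦ xi (1 / 2 + γ * I) :=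
    differentiable_xi.continuous.comp (by fun_prop)
  have h0 : xi (1 / 2 + (0 : ℝ) * I) ≠ 0 := by simpa using xi_one_half_ne_zero
  obtain ⟨γ₀, hγ₀, h⟩ := Metric.eventually_nhds_iff.1 (hcont.continuousAt.eventually_ne h0)
  refine ⟨γ₀, hγ₀, fun γ hγ ↦ ?_⟩
  by_contra hm
  exact h (by simpa using hγ) (xi_eq_zero_of_zeroMult_ne_zero hm)

variable (hRH : ∀ s : ℂ, 1 / 2 < s.re → xi s ≠ 0)
include hRH

theorem re_eq_zero_of_xi_eq_zero {z : ℂ} (hz : xi (1 / 2 + z) = 0) : z.re = 0 := by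
  by_contra hre
  rcases lt_or_gt_of_ne hre with h | h
  · exact hRH (1 / 2 + -z) (by simpa using h) (by rwa [xi_one_half_add_neg])
  · exact hRH (1 / 2 + z) (by simpa using h) hz

theorem hasSum_zeroMult_mul_log {σ : ℝ} (hσ : 0 < σ) :
    HasSum (fun γ : ℝ ↦ zeroMult γ * log (1 + σ ^ 2 / γ ^ 2))
      (2 * log (‖xi (1 / 2 + σ)‖ / ‖xi (1 / 2)‖)) := by
  classical
  set f : ℂ → ℂ := fun z ↦ xi (1 / 2 + z)
  have hf : Differentiable ℂ f := differentiable_xi.comp (by fun_prop)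
  have h0 : f 0 ≠ 0 := by simpa [f] using xi_one_half_ne_zero
  have hfin (R : ℝ) : {γ : ℝ | |γ| ≤ R ∧ f (γ * I) = 0}.Finite := by
    refine ((finite_inter_zeros hf h0 (isCompact_closedBall 0 R)).preimage
      (f := fun γ : ℝ ↦ (γ : ℂ) * I) (by simp)).subset fun γ hγ ↦ ?_
    simpa using hγ
  set S : ℝ → Finset ℝ := fun R ↦ (hfin R).toFinset
  have hZ (R : ℝ) (a : ℂ) : a ∈ (S R).image (fun γ : ℝ ↦ (γ : ℂ) * I) ↔ ‖a‖ ≤ R ∧ f a = 0 := by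
    simp only [Finset.mem_image, S, Finite.mem_toFinset, mem_ofPred_eq]
    constructor
    · rintro ⟨γ, ⟨hγ, hfγ⟩, rfl⟩
      simpa using ⟨hγ, hfγ⟩
    · rintro ⟨ha, hfa⟩
      have heq : a = (a.im : ℂ) * I := by
        apply Complex.ext <;> simp [re_eq_zero_of_xi_eq_zero hRH hfa]
      exact ⟨a.im, ⟨(Complex.abs_im_le_norm a).trans ha, heq ▸ hfa⟩, heq.symm⟩
  have hlim := tendsto_prod_one_sub_div_pow hf xi_one_half_add_neg h0
    (fun ε hε ↦ eventually_norm_xi_le_exp_sq hε) hZ σ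
  have hinj : InjOn (fun γ : ℝ ↦ (γ : ℂ) * I) univ := by simp [InjOn]
  simp only [Finset.prod_image (hinj.mono (subset_univ _)), f, analyticOrderNatAt_xi_comp_add]
    at hlim
  have hlog := (hlim.norm.log (norm_ne_zero_iff.2 (div_ne_zero
    (hRH _ (by simpa using hσ)) h0))).const_mul 2
  simp only [two_mul_log_norm_prod_one_sub_div_mul_I, norm_div, add_zero] at hlog
  refine hasSum_of_tendsto_sum_of_nonneg (fun γ ↦ ?_) (fun γ hγ ↦ ?_) hlog
  · exact mul_nonneg (Nat.cast_nonneg _) (log_nonneg (le_add_of_nonneg_right (by positivity)))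
  · have hm : zeroMult γ ≠ 0 := fun h ↦ hγ (by rw [h, Nat.cast_zero, zero_mul])
    filter_upwards [eventually_ge_atTop |γ|] with R hR
    simpa [S, f, hR] using xi_eq_zero_of_zeroMult_ne_zero hm

theorem summable_zeroMult_div : Summable fun γ : ℝ ↦ zeroMult γ / (1 / 4 + γ ^ 2) := by
  have hsum := (hasSum_zeroMult_mul_log hRH (σ := 1 / 2) (by norm_num)).summable.mul_left 4
  refine Summable.of_nonneg_of_le (fun γ ↦ by positivity) (fun γ ↦ ?_) hsum
  rcases eq_or_ne γ 0 with rfl | hγ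
  · simp [zeroMult_zero]
  have hlog := one_sub_inv_le_log_of_pos (x := 1 + (1 / 2) ^ 2 / γ ^ 2) (by positivity)
  have hinv : 1 - (1 + (1 / 2) ^ 2 / γ ^ 2)⁻¹ = 1 / 4 * (1 / (1 / 4 + γ ^ 2)) := by
    field_simp
    ring
  rw [hinv] at hlog
  rw [mul_left_comm, div_eq_mul_one_div]
  gcongr
  linarith


theorem norm_xi_le_of_sum_zeroMult_le_linear {K : ℝ}
    (hK : ∀ T > 0, ∀ S : Finset ℝ, (∀ γ ∈ S, 0 < γ ∧ γ ≤ T) → ∑ γ ∈ S, (zeroMult γ : ℝ) ≤ K * T)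
    {σ : ℝ} (hσ : 0 < σ) : ‖xi (1 / 2 + σ)‖ ≤ ‖xi (1 / 2)‖ * exp (K * (π * σ)) := by
  classical
  set g : ℝ → ℝ := fun γ ↦ zeroMult γ * log (1 + σ ^ 2 / γ ^ 2)
  have hpos (S : Finset ℝ) (hS : ∀ γ ∈ S, 0 < γ) : ∑ γ ∈ S, g γ ≤ K * (π * σ) :=
    sum_mul_log_one_add_sq_div_sq_le hS (fun T hT ↦ hK T hT _ fun γ hγ ↦
      ⟨hS γ (Finset.mem_filter.1 hγ).1, (Finset.mem_filter.1 hγ).2⟩) hσ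
  have hsum (S : Finset ℝ) : ∑ γ ∈ S, g γ ≤ 2 * (K * (π * σ)) := by
    have hneg : ∑ γ ∈ S with γ < 0, g γ = ∑ γ ∈ (S.filter (· < 0)).image (-·), g γ := by
      rw [Finset.sum_image (by simp)]
      exact Finset.sum_congr rfl fun γ _ ↦ by simp [g, zeroMult_neg]
    have hnonneg : ∑ γ ∈ S with ¬γ < 0, g γ = ∑ γ ∈ S with 0 < γ, g γ := by
      refine (Finset.sum_subset (fun γ hγ ↦ ?_) fun γ hγ hγ' ↦ ?_).symm
      · have := (Finset.mem_filter.1 hγ).2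
        exact Finset.mem_filter.2 ⟨(Finset.mem_filter.1 hγ).1, this.not_gt⟩
      · have : γ = 0 := by
          simp only [Finset.mem_filter, not_lt, not_and] at hγ hγ'
          exact le_antisymm (hγ' hγ.1) hγ.2
        simp [g, this]
    rw [← Finset.sum_filter_add_sum_filter_not S (· < 0), hneg, hnonneg, two_mul]
    refine add_le_add (hpos _ fun γ hγ ↦ ?_) (hpos _ (by simp))
    obtain ⟨x, hx, rfl⟩ := Finset.mem_image.1 hγ
    exact neg_pos.2 (Finset.mem_filter.1 hx).2
  have hlog := hasSum_le_of_sum_le (hasSum_zeroMult_mul_log hRH hσ) hsum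
  have h12 := norm_pos_iff.2 xi_one_half_ne_zero
  have hratio : 0 < ‖xi (1 / 2 + σ)‖ / ‖xi (1 / 2)‖ :=
    div_pos (norm_pos_iff.2 (hRH _ (by simpa using hσ))) h12
  rw [mul_comm, ← div_le_iff₀ h12, ← log_le_iff_le_exp hratio]
  linarith

/- A linear bound on the zero-counting function would make `ξ` grow at most exponentially, whereas
`ξ (2n)` grows factorially. -/
theorem not_sum_zeroMult_le_linear (K : ℝ) :
    ¬ ∀ T > 0, ∀ S : Finset ℝ, (∀ γ ∈ S, 0 < γ ∧ γ ≤ T) → ∑ γ ∈ S, (zeroMult γ : ℝ) ≤ K * T := by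
  intro hK
  set A : ℝ := exp (2 * |K| * π) * π
  have hle (n : ℕ) : 1 ≤ ‖xi (1 / 2)‖ * A * (A ^ n / n.factorial) := by
    have hexp : exp (K * (π * (2 * (n + 1) - 1 / 2))) ≤ exp (2 * |K| * π) ^ (n + 1) := by
      rw [← exp_nat_mul, exp_le_exp]
      push_cast
      calc K * (π * (2 * (n + 1) - 1 / 2)) ≤ |K| * (π * (2 * (n + 1))) := by
            have : (0 : ℝ) ≤ n := n.cast_nonneg
            refine mul_le_mul (le_abs_self K) ?_ (by nlinarith [pi_pos]) (abs_nonneg K)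
            gcongr
            linarith
        _ = (n + 1) * (2 * |K| * π) := by ring
    have hσ : 0 < 2 * ((n : ℝ) + 1) - 1 / 2 := by linarith [n.cast_nonneg (α := ℝ)]
    have h := ((factorial_div_le_norm_xi n).trans_eq
      (congrArg (‖xi ·‖) (by push_cast; ring))).trans
      (norm_xi_le_of_sum_zeroMult_le_linear hRH hK hσ)
    have h' := h.trans (mul_le_mul_of_nonneg_left hexp (norm_nonneg _))
    rw [div_le_iff₀ (by positivity), mul_assoc, ← mul_pow] at h'
    have hfac : (0 : ℝ) < n.factorial := by positivity
    rw [← mul_div_assoc, le_div_iff₀ hfac, one_mul]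
    exact h'.trans_eq (by ring)
  have hlim := (FloorSemiring.tendsto_pow_div_factorial_atTop A).const_mul (‖xi (1 / 2)‖ * A)
  rw [mul_zero] at hlim
  exact absurd (ge_of_tendsto' hlim hle) (by norm_num)

end ZeroCounting

section PositiveDefinite

/-- A positive definite function on the discrete additive group `ℝ`; only the real part of the
quadratic form is recorded, which is all that the Fejér argument needs. -/
def IsPosDef (r : ℝ → ℂ) : Prop :=
  ∀ (B : Finset ℝ) (a : ℝ → ℂ), 0 ≤ (∑ x ∈ B, ∑ y ∈ B, a x * starRingEnd ℂ (a y) * r (x - y)).re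

theorem exists_mul_succ_le_of_le_pow {b : ℕ → ℝ} {k : ℕ} (hb0 : 0 < b 0)
    (hb : ∀ n : ℕ, b n ≤ (n + 1) ^ k) {ρ : ℝ} (hρ : ρ ∈ Ioo 0 1) :
    ∃ n, ρ * b (n + 1) ≤ b n := by
  by_contra! hlt
  have hgrowth (n : ℕ) : b 0 ≤ ρ ^ n * b n := by
    induction n with
    | zero => simp
    | succ n ih =>
      calc b 0 ≤ ρ ^ n * b n := ih
        _ ≤ ρ ^ n * (ρ * b (n + 1)) := by have := hρ.1; gcongr; exact (hlt n).le
        _ = ρ ^ (n + 1) * b (n + 1) := by ring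
  have hlim : Tendsto (fun n : ℕ ↦ ρ⁻¹ * (((n + 1 : ℕ) : ℝ) ^ k * ρ ^ (n + 1))) atTop
      (𝓝 (ρ⁻¹ * 0)) :=
    ((tendsto_pow_const_mul_const_pow_of_abs_lt_one k (abs_lt.2 ⟨by linarith [hρ.1], hρ.2⟩)).comp
      (tendsto_add_atTop_nat 1)).const_mul _
  rw [mul_zero] at hlim
  refine hb0.not_ge (ge_of_tendsto' hlim fun n ↦ (hgrowth n).trans ?_)
  calc ρ ^ n * b n ≤ ρ ^ n * (n + 1) ^ k := by have := hρ.1; gcongr; exact hb n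
    _ = ρ⁻¹ * (((n + 1 : ℕ) : ℝ) ^ k * ρ ^ (n + 1)) := by
      have := hρ.1.ne'
      push_cast
      field_simp
      ring

/-- The sums `∑ k ν • ν` over `ν ∈ S` with coefficients `0 ≤ k ν ≤ n`: Følner sets for translation
by the elements of `S`, because their size grows polynomially in `n`. -/
noncomputable def combinationsLE {G : Type*} [AddCommMonoid G] [DecidableEq G] (S : Finset G)
    (n : ℕ) : Finset G :=
  (Fintype.piFinset fun _ : S ↦ Finset.range (n + 1)).image fun k ↦ ∑ ν : S, k ν • (ν : G)

section Folner

variable {G : Type*} [DecidableEq G]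

theorem card_combinationsLE_le [AddCommMonoid G] (S : Finset G) (n : ℕ) :
    (combinationsLE S n).card ≤ (n + 1) ^ S.card :=
  Finset.card_image_le.trans (by simp [Fintype.card_piFinset])

theorem zero_mem_combinationsLE [AddCommMonoid G] (S : Finset G) (n : ℕ) :
    0 ∈ combinationsLE S n :=
  Finset.mem_image.2 ⟨0, by simp, by simp⟩

theorem combinationsLE_subset_succ [AddCommMonoid G] (S : Finset G) (n : ℕ) :
    combinationsLE S n ⊆ combinationsLE S (n + 1) :=
  Finset.image_subset_image <| Fintype.piFinset_subset _ _ fun _ ↦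
    Finset.range_mono (Nat.le_succ _)

theorem add_mem_combinationsLE_succ [AddCommMonoid G] {S : Finset G} {n : ℕ} {x ν : G}
    (hx : x ∈ combinationsLE S n) (hν : ν ∈ S) : x + ν ∈ combinationsLE S (n + 1) := by
  obtain ⟨k, hk, rfl⟩ := Finset.mem_image.1 hx
  refine Finset.mem_image.2 ⟨k + Pi.single ⟨ν, hν⟩ 1, ?_, ?_⟩
  · simp only [Fintype.mem_piFinset, Finset.mem_range, Pi.add_apply] at hk ⊢
    intro s
    have := hk s
    rcases eq_or_ne s ⟨ν, hν⟩ with rfl | h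
    · simpa using this
    · simpa [h] using this.le
  · simp only [Pi.add_apply, add_smul, Finset.sum_add_distrib]
    congr 1
    rw [Finset.sum_eq_single ⟨ν, hν⟩ (fun b _ hb ↦ by simp [hb]) (by simp), Pi.single_eq_same,
      one_smul]

theorem exists_mul_card_le_card_filter_add_mem [AddCommMonoid G] (S : Finset G) {ρ : ℝ}
    (hρ : ρ ∈ Ioo 0 1) :
    ∃ B : Finset G, B.Nonempty ∧ ∀ ν ∈ S, ρ * B.card ≤ (B.filter (· + ν ∈ B)).card := by
  obtain ⟨n, hn⟩ := exists_mul_succ_le_of_le_pow (b := fun n ↦ (combinationsLE S n).card)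
    (by exact_mod_cast Finset.card_pos.2 ⟨0, zero_mem_combinationsLE S 0⟩)
    (fun n ↦ by exact_mod_cast card_combinationsLE_le S n) hρ
  refine ⟨combinationsLE S (n + 1), ⟨0, zero_mem_combinationsLE S _⟩, fun ν hν ↦ hn.trans ?_⟩
  exact_mod_cast Finset.card_le_card fun x hx ↦ Finset.mem_filter.2
    ⟨combinationsLE_subset_succ S n hx, add_mem_combinationsLE_succ hx hν⟩

theorem sum_sub_eq_sum_card_filter_mul [AddCommGroup G] {φ : G → ℝ} {S : Finset G}
    (hS : ∀ ν ∉ S, φ ν = 0) (B : Finset G) :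
    ∑ x ∈ B, ∑ y ∈ B, φ (x - y) = ∑ ν ∈ S, (B.filter (· + ν ∈ B)).card * φ ν := by
  have hrow (y : G) : ∑ x ∈ B, φ (x - y) = ∑ ν ∈ S with y + ν ∈ B, φ ν := by
    rw [← Finset.sum_filter_of_ne (p := fun x ↦ x - y ∈ S) fun x _ hx ↦ not_imp_comm.1 (hS _) hx]
    refine Finset.sum_nbij' (· - y) (y + ·) ?_ ?_ ?_ ?_ ?_ <;> simp +contextual
  rw [Finset.sum_comm]
  simp only [hrow, Finset.sum_filter]
  rw [Finset.sum_comm]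
  simp only [← Finset.sum_filter, Finset.sum_const, nsmul_eq_mul]

omit [DecidableEq G] in
theorem sum_nonneg_of_sum_sub_nonneg [AddCommGroup G] {φ : G → ℝ} {S : Finset G}
    (hS : ∀ ν ∉ S, φ ν = 0) (hφ : ∀ B : Finset G, 0 ≤ ∑ x ∈ B, ∑ y ∈ B, φ (x - y)) :
    0 ≤ ∑ ν ∈ S, φ ν := by
  classical
  have hbound (ρ : ℝ) (hρ : ρ ∈ Ioo 0 1) : 0 ≤ ∑ ν ∈ S, φ ν + (1 - ρ) * ∑ ν ∈ S, |φ ν| := by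
    obtain ⟨B, hB, hBS⟩ := exists_mul_card_le_card_filter_add_mem S hρ
    have hBpos : (0 : ℝ) < B.card := by exact_mod_cast hB.card_pos
    refine nonneg_of_mul_nonneg_right ((hφ B).trans ?_) hBpos
    rw [sum_sub_eq_sum_card_filter_mul hS, Finset.mul_sum, ← Finset.sum_add_distrib,
      Finset.mul_sum]
    refine Finset.sum_le_sum fun ν hν ↦ ?_
    have hlower := hBS ν hν
    have hupper : ((B.filter (· + ν ∈ B)).card : ℝ) ≤ B.card := by
      exact_mod_cast Finset.card_filter_le _ _
    nlinarith [neg_abs_le (φ ν), abs_nonneg (φ ν)]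
  have hlim : Tendsto (fun ρ ↦ ∑ ν ∈ S, φ ν + (1 - ρ) * ∑ ν ∈ S, |φ ν|) (𝓝[<] 1)
      (𝓝 (∑ ν ∈ S, φ ν + (1 - 1) * ∑ ν ∈ S, |φ ν|)) :=
    tendsto_nhdsWithin_of_tendsto_nhds
      (((tendsto_id.const_sub 1).mul_const _).const_add (∑ ν ∈ S, φ ν))
  rw [sub_self, zero_mul, add_zero] at hlim
  exact ge_of_tendsto hlim (mem_of_superset (Ioo_mem_nhdsLT zero_lt_one) hbound)

end Folner

theorem IsPosDef.mul_exp {r : ℝ → ℂ} (hr : IsPosDef r) (δ : ℝ) :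
    IsPosDef fun x ↦ r x * Complex.exp (x * δ * I) := by
  intro B a
  refine (hr B fun x ↦ a x * Complex.exp (x * δ * I)).trans_eq ?_
  refine congrArg Complex.re (Finset.sum_congr rfl fun x _ ↦ Finset.sum_congr rfl fun y _ ↦ ?_)
  beta_reduce
  rw [map_mul, ← Complex.exp_conj, Complex.ofReal_sub, sub_mul, sub_mul,
    sub_eq_add_neg (_ * _ * I), Complex.exp_add]
  simp only [map_mul, Complex.conj_ofReal, Complex.conj_I, mul_neg]
  ring

/-- The (unnormalized) Fejér kernel, a triangle supported on `[-T, T]`. -/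
noncomputable def fejer (T x : ℝ) : ℝ := max 0 (T - |x|)

theorem fejer_eq_zero {T x : ℝ} (hx : T ≤ |x|) : fejer T x = 0 :=
  max_eq_left (sub_nonpos.2 hx)

theorem integrable_and_integral_indicator_mul_indicator (T x y : ℝ) :
    Integrable (fun u ↦ (Icc x (x + T)).indicator (1 : ℝ → ℝ) u * (Icc y (y + T)).indicator 1 u) ∧
      ∫ u, (Icc x (x + T)).indicator (1 : ℝ → ℝ) u * (Icc y (y + T)).indicator 1 u =
        fejer T (x - y) := by
  have hinter : (fun u ↦ (Icc x (x + T)).indicator (1 : ℝ → ℝ) u *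
      (Icc y (y + T)).indicator 1 u) = (Icc (max x y) (min x y + T)).indicator 1 := by
    ext u
    rw [← inter_indicator_mul, Icc_inter_Icc, min_add_add_right]
    simp [indicator]
  rw [hinter]
  refine ⟨(integrable_indicator_iff measurableSet_Icc).2
    (integrableOn_const (C := (1 : ℝ)) (by simp)), ?_⟩
  rw [integral_indicator_one measurableSet_Icc, volume_real_Icc, fejer, ← max_sub_min_eq_abs',
    max_comm]
  ring_nf

theorem IsPosDef.sum_sum_re_mul_fejer_nonneg {r : ℝ → ℂ} (hr : IsPosDef r) (T : ℝ)
    (B : Finset ℝ) : 0 ≤ ∑ x ∈ B, ∑ y ∈ B, (r (x - y)).re * fejer T (x - y) := by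
  set χ : ℝ → ℝ → ℝ := fun x ↦ (Icc x (x + T)).indicator 1
  have hχ : 0 ≤ fun u ↦ ∑ x ∈ B, ∑ y ∈ B, (r (x - y)).re * (χ x u * χ y u) := by
    refine fun u ↦ (hr B fun x ↦ (χ x u : ℂ)).trans_eq ?_
    simp only [Complex.re_sum]
    refine Finset.sum_congr rfl fun x _ ↦ Finset.sum_congr rfl fun y _ ↦ ?_
    rw [Complex.conj_ofReal, ← Complex.ofReal_mul, Complex.re_ofReal_mul, mul_comm]
  have hint (x y : ℝ) := integrable_and_integral_indicator_mul_indicator T x y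
  refine (integral_nonneg (μ := volume) hχ).trans_eq ?_
  rw [integral_finsetSum _ fun x _ ↦ integrable_finsetSum _ fun y _ ↦ (hint x y).1.const_mul _]
  refine Finset.sum_congr rfl fun x _ ↦ ?_
  rw [integral_finsetSum _ fun y _ ↦ (hint x y).1.const_mul _]
  refine Finset.sum_congr rfl fun y _ ↦ ?_
  rw [integral_const_mul, (hint x y).2]

theorem IsPosDef.sum_re_mul_fejer_nonneg {r : ℝ → ℂ} (hr : IsPosDef r) {T : ℝ}
    {S : Finset ℝ} (hS : ∀ x ∉ S, |x| < T → r x = 0) : 0 ≤ ∑ x ∈ S, (r x).re * fejer T x := by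
  refine sum_nonneg_of_sum_sub_nonneg (fun x hx ↦ ?_) (hr.sum_sum_re_mul_fejer_nonneg T)
  rcases lt_or_ge |x| T with hxT | hxT
  · simp [hS x hx hxT]
  · simp [fejer_eq_zero hxT]

end PositiveDefinite

section LinearBound

theorem re_div_mul_exp (c γ δ : ℝ) :
    (c / (1 / 2 + γ * I) * Complex.exp (γ * δ * I)).re =
      c * (cos (γ * δ) / 2 + γ * sin (γ * δ)) / (1 / 4 + γ ^ 2) := by
  rw [← Complex.ofReal_mul, Complex.exp_mul_I, ← Complex.ofReal_cos, ← Complex.ofReal_sin]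
  have hnorm : Complex.normSq (1 / 2 + γ * I) = 1 / 4 + γ ^ 2 := by
    simp [Complex.normSq_apply]
    ring
  rw [div_mul_eq_mul_div, Complex.div_re, hnorm]
  simp only [Complex.mul_re, Complex.mul_im, Complex.add_re, Complex.add_im, Complex.ofReal_re,
    Complex.ofReal_im, Complex.I_re, Complex.I_im, Complex.div_ofNat_re, Complex.div_ofNat_im,
    Complex.one_re, Complex.one_im]
  ring

theorem two_div_pi_mul_sq_le_mul_sin {x : ℝ} (hx : |x| ≤ π / 2) : 2 / π * x ^ 2 ≤ x * sin x := by
  have hxsin : 0 ≤ x * sin x := by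
    rcases le_total 0 x with h | h
    · exact mul_nonneg h (sin_nonneg_of_nonneg_of_le_pi h (by linarith [le_abs_self x, pi_pos]))
    · exact mul_nonneg_of_nonpos_of_nonpos h
        (sin_nonpos_of_nonpos_of_neg_pi_le h (by linarith [neg_abs_le x, pi_pos]))
  rw [← abs_of_nonneg hxsin, abs_mul, ← sq_abs]
  calc 2 / π * |x| ^ 2 = |x| * (2 / π * |x|) := by ring
    _ ≤ |x| * |sin x| := by gcongr; exact mul_abs_le_abs_sin hx

theorem fejer_nonneg (T x : ℝ) : 0 ≤ fejer T x := le_max_left _ _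

theorem fejer_le {T : ℝ} (hT : 0 ≤ T) (x : ℝ) : fejer T x ≤ T :=
  max_le hT (sub_le_self T (abs_nonneg x))

theorem re_div_mul_exp_mul_fejer_le {c : ℝ} (hc : 0 ≤ c) {T : ℝ} (hT : 0 < T) (γ : ℝ) :
    (c / (1 / 2 + γ * I) * Complex.exp (γ * (-T⁻¹ : ℝ) * I)).re * fejer T γ ≤
      T / 2 * (c / (1 / 4 + γ ^ 2)) - 2 / (π * T) * (c * γ ^ 2 / (1 / 4 + γ ^ 2) * fejer T γ) := by
  rcases lt_or_ge T |γ| with hγ | hγ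
  · rw [fejer_eq_zero hγ.le, mul_zero, mul_zero, mul_zero, sub_zero]
    positivity
  have hangle : |γ / T| ≤ π / 2 := by
    rw [abs_div, abs_of_pos hT]
    exact ((div_le_one hT).2 hγ).trans (by linarith [pi_gt_three])
  have hsin : 2 / (π * T) * γ ^ 2 ≤ γ * sin (γ / T) := by
    calc 2 / (π * T) * γ ^ 2 = T * (2 / π * (γ / T) ^ 2) := by field_simp
      _ ≤ T * (γ / T * sin (γ / T)) :=
          mul_le_mul_of_nonneg_left (two_div_pi_mul_sq_le_mul_sin hangle) hT.le
      _ = γ * sin (γ / T) := by field_simp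
  have hle : cos (γ / T) / 2 - γ * sin (γ / T) ≤ 1 / 2 - 2 / (π * T) * γ ^ 2 := by
    linarith [cos_le_one (γ / T)]
  have hweight : 0 ≤ c / (1 / 4 + γ ^ 2) * fejer T γ :=
    mul_nonneg (by positivity) (fejer_nonneg T γ)
  calc _ = c / (1 / 4 + γ ^ 2) * fejer T γ * (cos (γ / T) / 2 - γ * sin (γ / T)) := by
        rw [re_div_mul_exp, mul_neg, cos_neg, sin_neg, ← div_eq_mul_inv]
        ring
    _ ≤ c / (1 / 4 + γ ^ 2) * fejer T γ * (1 / 2 - 2 / (π * T) * γ ^ 2) := by gcongr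
    _ = c / (1 / 4 + γ ^ 2) * fejer T γ / 2 -
          2 / (π * T) * (c * γ ^ 2 / (1 / 4 + γ ^ 2) * fejer T γ) := by ring
    _ ≤ c / (1 / 4 + γ ^ 2) * T / 2 -
          2 / (π * T) * (c * γ ^ 2 / (1 / 4 + γ ^ 2) * fejer T γ) := by
        gcongr
        exact fejer_le hT.le γ
    _ = _ := by ring

/- Test positive definiteness against the Fejér kernel of width `2 * T` and the character of
frequency `1 / (2 * T)`: there `γ * sin (γ / (2 * T))` is of size `γ ^ 2 / T`. -/
theorem IsPosDef.exists_sum_le_linear {c : ℝ → ℝ} (hc : 0 ≤ c)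
    (hfin : ∀ T, {γ | |γ| < T ∧ c γ ≠ 0}.Finite) (hsum : Summable fun γ ↦ c γ / (1 / 4 + γ ^ 2))
    (hpd : IsPosDef fun γ ↦ c γ / (1 / 2 + γ * I)) {γ₀ : ℝ} (hγ₀ : 0 < γ₀) :
    ∃ K, ∀ T > 0, ∀ S : Finset ℝ, (∀ γ ∈ S, γ₀ ≤ γ ∧ γ ≤ T) → ∑ γ ∈ S, c γ ≤ K * T := by
  classical
  set B : ℝ := ∑' γ, c γ / (1 / 4 + γ ^ 2)
  set q : ℝ := γ₀ ^ 2 / (1 / 4 + γ₀ ^ 2)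
  refine ⟨π * B / q, fun T hT S hS ↦ ?_⟩
  set R : Finset ℝ := (hfin (2 * T)).toFinset ∪ S
  have hnonneg := (hpd.mul_exp (-(2 * T)⁻¹)).sum_re_mul_fejer_nonneg (T := 2 * T) (S := R)
    fun x hx hxT ↦ by
      have hcx : c x = 0 := by simp_all [R]
      simp [hcx]
  have hterm (γ : ℝ) : 0 ≤ c γ * γ ^ 2 / (1 / 4 + γ ^ 2) * fejer (2 * T) γ :=
    mul_nonneg (div_nonneg (mul_nonneg (hc γ) (sq_nonneg γ)) (by positivity)) (fejer_nonneg _ _)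
  have hlower (γ : ℝ) (hγ : γ ∈ S) :
      c γ * q * T ≤ c γ * γ ^ 2 / (1 / 4 + γ ^ 2) * fejer (2 * T) γ := by
    obtain ⟨hγ₀γ, hγT⟩ := hS γ hγ
    have hq : q ≤ γ ^ 2 / (1 / 4 + γ ^ 2) := by
      rw [div_le_div_iff₀ (by positivity) (by positivity)]
      nlinarith [pow_le_pow_left₀ hγ₀.le hγ₀γ 2]
    have hfejer : T ≤ fejer (2 * T) γ :=
      le_max_of_le_right (by rw [abs_of_pos (hγ₀.trans_le hγ₀γ)]; linarith)
    rw [mul_div_assoc]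
    have : 0 ≤ c γ := hc γ
    gcongr
  have hupper : 2 / (π * (2 * T)) * ∑ γ ∈ S, c γ * q * T ≤ 2 * T / 2 * B := by
    calc 2 / (π * (2 * T)) * ∑ γ ∈ S, c γ * q * T
        ≤ 2 / (π * (2 * T)) * ∑ γ ∈ R, c γ * γ ^ 2 / (1 / 4 + γ ^ 2) * fejer (2 * T) γ := by
          gcongr
          exact (Finset.sum_le_sum hlower).trans (Finset.sum_le_sum_of_subset_of_nonneg
            Finset.subset_union_right fun γ _ _ ↦ hterm γ)
      _ ≤ 2 * T / 2 * ∑ γ ∈ R, c γ / (1 / 4 + γ ^ 2) := by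
          have := hnonneg.trans (Finset.sum_le_sum fun γ _ ↦
            re_div_mul_exp_mul_fejer_le (hc γ) (by positivity : 0 < 2 * T) γ)
          rwa [Finset.sum_sub_distrib, ← Finset.mul_sum, ← Finset.mul_sum, sub_nonneg] at this
      _ ≤ 2 * T / 2 * B := by
          gcongr
          exact hsum.sum_le_tsum R fun γ _ ↦ div_nonneg (hc γ) (by positivity)
  have hq : 0 < q := by positivity
  rw [← Finset.sum_mul, ← Finset.sum_mul] at hupper
  calc ∑ γ ∈ S, c γ = π / q * (2 / (π * (2 * T)) * ((∑ γ ∈ S, c γ) * q * T)) := by field_simp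
    _ ≤ π / q * (2 * T / 2 * B) := by gcongr
    _ = π * B / q * T := by ring

/-- The coefficients `(m γ + [γ = 0] / 2) / (1 / 2 + γ * I)`, with `m γ` the multiplicity of the
zero `1 / 2 + γ * I` of `ξ`: up to sign, the residues at `1 / 2 + γ * I` of the Mellin transform of
`π - Li`. The extra `1 / 2` comes from the squares of primes. -/
noncomputable def residueCoeff (γ : ℝ) : ℂ :=
  (zeroMult γ + if γ = 0 then 1 / 2 else 0 : ℝ) / (1 / 2 + γ * I)

theorem finite_zeroMult_ne_zero (T : ℝ) : {γ : ℝ | |γ| < T ∧ zeroMult γ ≠ 0}.Finite := by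
  have hinj : Function.Injective fun γ : ℝ ↦ (1 / 2 + γ * I : ℂ) := fun a b h ↦ by simpa using h
  refine ((finite_inter_zeros differentiable_xi xi_one_half_ne_zero
    (isCompact_closedBall (1 / 2 : ℂ) T)).preimage hinj.injOn).subset fun γ hγ ↦
    ⟨?_, xi_eq_zero_of_zeroMult_ne_zero hγ.2⟩
  simpa [dist_eq_norm] using hγ.1.le

theorem not_isPosDef_residueCoeff (hRH : ∀ s : ℂ, 1 / 2 < s.re → xi s ≠ 0) :
    ¬ IsPosDef residueCoeff := by
  classical
  intro hpd
  set c : ℝ → ℝ := fun γ ↦ zeroMult γ + if γ = 0 then 1 / 2 else 0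
  have hc : 0 ≤ c := fun γ ↦ by simp only [c]; positivity
  have hfin (T : ℝ) : {γ | |γ| < T ∧ c γ ≠ 0}.Finite := by
    refine ((finite_zeroMult_ne_zero T).insert 0).subset fun γ hγ ↦ ?_
    rcases eq_or_ne γ 0 with h | h
    · exact Or.inl h
    · exact Or.inr ⟨hγ.1, by simpa [c, h] using hγ.2⟩
  have hsum : Summable fun γ ↦ c γ / (1 / 4 + γ ^ 2) := by
    refine (summable_congr_cofinite ?_).2 (summable_zeroMult_div hRH)
    exact (eventually_cofinite_ne 0).mono fun γ hγ ↦ by simp [c, hγ]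
  obtain ⟨γ₀, hγ₀, hzero⟩ := exists_pos_forall_abs_lt_zeroMult_eq_zero
  obtain ⟨K, hK⟩ := IsPosDef.exists_sum_le_linear hc hfin hsum hpd hγ₀
  refine not_sum_zeroMult_le_linear hRH K fun T hT S hS ↦ ?_
  calc ∑ γ ∈ S, (zeroMult γ : ℝ) = ∑ γ ∈ S with γ₀ ≤ γ, (zeroMult γ : ℝ) := by
        refine (Finset.sum_filter_of_ne fun γ hγ hne ↦ not_lt.1 fun hlt ↦ hne ?_).symm
        rw [hzero γ (by rwa [abs_of_pos (hS γ hγ).1]), Nat.cast_zero]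
    _ ≤ ∑ γ ∈ S with γ₀ ≤ γ, c γ := Finset.sum_le_sum fun γ _ ↦ by simp only [c]; split_ifs <;> simp
    _ ≤ K * T := hK T hT _ fun γ hγ ↦
        ⟨(Finset.mem_filter.1 hγ).2, (hS γ (Finset.mem_filter.1 hγ).1).2⟩

end LinearBound

section Landau

variable {Ω : Type*} [MeasurableSpace Ω] {μ : Measure Ω} {Y : Ω → ℝ}

theorem integrable_of_hasSum_of_nonneg {b : ℕ → Ω → ℝ} {F : Ω → ℝ} (hb : ∀ n, Integrable (b n) μ)
    (hb₀ : ∀ n, 0 ≤ᵐ[μ] b n) (hsum : Summable fun n ↦ ∫ ω, b n ω ∂μ)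
    (hF : ∀ᵐ ω ∂μ, HasSum (b · ω) (F ω)) : Integrable F μ := by
  refine ⟨aestronglyMeasurable_of_tendsto_ae atTop
    (fun n ↦ Finset.aestronglyMeasurable_fun_sum _ fun k _ ↦ (hb k).aestronglyMeasurable)
    (hF.mono fun ω hω ↦ hω.tendsto_sum_nat), ?_⟩
  have hlintegral : ∫⁻ ω, ‖F ω‖ₑ ∂μ = ∑' n, ∫⁻ ω, ENNReal.ofReal (b n ω) ∂μ := by
    rw [← lintegral_tsum fun n ↦ (hb n).aemeasurable.ennreal_ofReal]
    refine lintegral_congr_ae ?_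
    filter_upwards [ae_all_iff.2 hb₀, hF] with ω hω hFω
    rw [← ENNReal.ofReal_tsum_of_nonneg hω hFω.summable, hFω.tsum_eq,
      Real.enorm_of_nonneg (hFω.nonneg hω)]
  rw [HasFiniteIntegral, hlintegral]
  simp_rw [← ofReal_integral_eq_lintegral_ofReal (hb _) (hb₀ _)]
  rw [← ENNReal.ofReal_tsum_of_nonneg (fun n ↦ integral_nonneg_of_ae (hb₀ n)) hsum]
  exact ENNReal.ofReal_lt_top

theorem mem_interior_integrableExpSet_of_lt {a σ : ℝ} (h : Ioi a ⊆ integrableExpSet Y μ)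
    (hσ : a < σ) : σ ∈ interior (integrableExpSet Y μ) :=
  interior_maximal h isOpen_Ioi hσ

theorem mem_integrableExpSet_of_le (hY : AEMeasurable Y μ) (hY₀ : ∀ᵐ ω ∂μ, Y ω ≤ 0) {σ τ : ℝ}
    (hσ : σ ∈ integrableExpSet Y μ) (hστ : σ ≤ τ) : τ ∈ integrableExpSet Y μ := by
  refine Integrable.mono' hσ (by fun_prop) ?_
  filter_upwards [hY₀] with ω hω
  rw [Real.norm_of_nonneg (exp_nonneg _)]
  exact exp_le_exp.2 (mul_le_mul_of_nonpos_right hστ hω)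

-- All terms of the Taylor expansion about `c` are nonnegative at a point `σ ≤ c`, so its
-- convergence there forces the integral of the sum to be finite.
theorem mem_integrableExpSet_of_differentiableOn_ball (hY₀ : ∀ᵐ ω ∂μ, Y ω ≤ 0) {c ρ σ : ℝ}
    (hc : c ∈ interior (integrableExpSet Y μ)) {g : ℂ → ℂ}
    (hg : DifferentiableOn ℂ g (ball (c : ℂ) ρ)) (hgM : g =ᶠ[𝓝 (c : ℂ)] complexMGF Y μ)
    (hρσ : c - ρ < σ) (hσc : σ ≤ c) : σ ∈ integrableExpSet Y μ := by
  have hσ : (σ : ℂ) ∈ ball (c : ℂ) ρ := by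
    rw [mem_ball, Complex.dist_of_im_eq (by simp), Complex.ofReal_re, Complex.ofReal_re,
      Real.dist_eq, abs_of_nonpos (by linarith)]
    linarith
  let b : ℕ → Ω → ℝ := fun n ω ↦ ((σ - c) * Y ω) ^ n / n.factorial * exp (c * Y ω)
  have hb_eq (n : ℕ) :
      b n = fun ω ↦ (σ - c) ^ n / n.factorial * (Y ω ^ n * exp (c * Y ω)) := by
    ext ω
    simp only [b, mul_pow]
    ring
  have hb (n : ℕ) : Integrable (b n) μ := by
    rw [hb_eq]
    exact (integrable_pow_mul_exp_of_mem_interior_integrableExpSet hc n).const_mul _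
  have hb₀ (n : ℕ) : 0 ≤ᵐ[μ] b n := by
    filter_upwards [hY₀] with ω hω
    have : 0 ≤ (σ - c) * Y ω := mul_nonneg_of_nonpos_of_nonpos (by linarith) hω
    simp only [b, Pi.zero_apply]
    positivity
  have htaylor (n : ℕ) : (n.factorial : ℂ)⁻¹ • ((σ : ℂ) - c) ^ n • iteratedDeriv n g c =
      (∫ ω, b n ω ∂μ : ℝ) := by
    rw [hgM.iteratedDeriv_eq n, iteratedDeriv_complexMGF (by simpa using hc), hb_eq,
      integral_const_mul, Complex.ofReal_mul, ← integral_complex_ofReal]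
    push_cast
    simp only [smul_eq_mul]
    ring
  refine integrable_of_hasSum_of_nonneg hb hb₀ ?_ (ae_of_all _ fun ω ↦ ?_)
  · have hsum := (Complex.hasSum_taylorSeries_on_ball hg hσ).summable
    simp only [htaylor] at hsum
    exact_mod_cast hsum
  · have hexp := (NormedSpace.expSeries_div_hasSum_exp ((σ - c) * Y ω)).mul_right (exp (c * Y ω))
    rwa [← exp_eq_exp_ℝ, ← exp_add, ← add_mul, sub_add_cancel] at hexp

-- Landau's theorem: the abscissa of convergence is a singularity.
theorem Ioi_subset_integrableExpSet (hY : AEMeasurable Y μ) (hY₀ : ∀ᵐ ω ∂μ, Y ω ≤ 0) {a₀ : ℝ}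
    (hne : (integrableExpSet Y μ).Nonempty)
    (hcont : ∀ a > a₀, Ioi a ⊆ integrableExpSet Y μ → ∃ ρ > 0, ∃ g : ℂ → ℂ,
      DifferentiableOn ℂ g (ball (a : ℂ) ρ) ∧
        ∀ z ∈ ball (a : ℂ) ρ, a < z.re → g z = complexMGF Y μ z) :
    Ioi a₀ ⊆ integrableExpSet Y μ := by
  by_contra hsub
  obtain ⟨σ₁, hσ₁, hσ₁E⟩ := not_subset.1 hsub
  have hlow : σ₁ ∈ lowerBounds (integrableExpSet Y μ) := fun σ hσ ↦
    le_of_not_ge fun hle ↦ hσ₁E (mem_integrableExpSet_of_le hY hY₀ hσ hle)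
  set a := sInf (integrableExpSet Y μ)
  have hE : Ioi a ⊆ integrableExpSet Y μ := fun σ hσ ↦
    have ⟨_, hτ, hlt⟩ := exists_lt_of_csInf_lt hne hσ
    mem_integrableExpSet_of_le hY hY₀ hτ hlt.le
  obtain ⟨ρ, hρ, g, hg, hgM⟩ := hcont a (hσ₁.trans_le (le_csInf hne hlow)) hE
  let c := a + ρ / 3
  have hsub : ball (c : ℂ) (ρ / 2) ⊆ ball (a : ℂ) ρ := by
    refine ball_subset_ball' ?_
    rw [Complex.dist_of_im_eq (by simp), Complex.ofReal_re, Complex.ofReal_re, Real.dist_eq,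
      add_sub_cancel_left, abs_of_pos (by positivity)]
    linarith
  have hgc : g =ᶠ[𝓝 (c : ℂ)] complexMGF Y μ := by
    filter_upwards [ball_mem_nhds (c : ℂ) (half_pos hρ),
      (isOpen_lt continuous_const Complex.continuous_re).mem_nhds
        (show a < (c : ℂ).re by simp only [c, Complex.ofReal_re]; linarith)] with z hz hre
    exact hgM z (hsub hz) hre
  have hmem : a - ρ / 12 ∈ integrableExpSet Y μ :=
    mem_integrableExpSet_of_differentiableOn_ball hY₀
      (mem_interior_integrableExpSet_of_lt hE (by simp only [c]; linarith)) (hg.mono hsub) hgc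
      (by simp only [c]; linarith) (by simp only [c]; linarith)
  linarith [csInf_le ⟨σ₁, hlow⟩ hmem]

theorem differentiableOn_id_mul_complexMGF {a : ℝ} (hE : Ioi a ⊆ integrableExpSet Y μ) :
    DifferentiableOn ℂ (fun z ↦ z * complexMGF Y μ z) {s | a < s.re} := fun _ hs ↦
  (differentiableAt_id.mul (hasDerivAt_complexMGF
    (mem_interior_integrableExpSet_of_lt hE hs)).differentiableAt).differentiableWithinAt

variable {f V : ℂ → ℂ} {a₀ a b : ℝ}

theorem mul_deriv_eq_of_lt (hf : DifferentiableOn ℂ f {s | a < s.re})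
    (hV : DifferentiableOn ℂ V {s | a < s.re}) (hE : Ioi a ⊆ integrableExpSet Y μ)
    (hid : ∀ s : ℂ, b < s.re → f s * deriv (fun z ↦ z * complexMGF Y μ z) s = V s) {s : ℂ}
    (hs : a < s.re) : f s * deriv (fun z ↦ z * complexMGF Y μ z) s = V s := by
  have hopen (r : ℝ) : IsOpen {s : ℂ | r < s.re} := isOpen_lt continuous_const Complex.continuous_re
  have hdist : a < ((max a b + 1 : ℝ) : ℂ).re ∧ b < ((max a b + 1 : ℝ) : ℂ).re := by
    rw [Complex.ofReal_re]
    exact ⟨by linarith [le_max_left a b], by linarith [le_max_right a b]⟩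
  refine AnalyticOnNhd.eqOn_of_preconnected_of_eventuallyEq
    ((hf.mul ((differentiableOn_id_mul_complexMGF hE).deriv (hopen a))).analyticOnNhd (hopen a))
    (hV.analyticOnNhd (hopen a)) (convex_halfSpace_re_gt a).isPreconnected hdist.1 ?_ hs
  filter_upwards [(hopen b).mem_nhds hdist.2] with s hs using hid s hs

theorem exists_extension_complexMGF (ha : 0 < a) (ha₀ : a₀ < a)
    (hf : DifferentiableOn ℂ f {s | a₀ < s.re}) (hfa : f a ≠ 0)
    (hV : DifferentiableOn ℂ V {s | a₀ < s.re}) (hE : Ioi a ⊆ integrableExpSet Y μ)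
    (hid : ∀ s : ℂ, a < s.re → f s * deriv (fun z ↦ z * complexMGF Y μ z) s = V s) :
    ∃ ρ > 0, ∃ g : ℂ → ℂ, DifferentiableOn ℂ g (ball (a : ℂ) ρ) ∧
      ∀ z ∈ ball (a : ℂ) ρ, a < z.re → g z = complexMGF Y μ z := by
  have hopen (r : ℝ) : IsOpen {s : ℂ | r < s.re} := isOpen_lt continuous_const Complex.continuous_re
  obtain ⟨ρ, hρ, hball⟩ : ∃ ρ > 0, ∀ z ∈ ball (a : ℂ) ρ, f z ≠ 0 ∧ a₀ < z.re ∧ z ≠ 0 := by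
    have hre : ∀ᶠ s : ℂ in 𝓝 a, a₀ < s.re := (hopen a₀).mem_nhds (by simpa using ha₀)
    exact eventually_nhds_iff_ball.1 <|
      ((hf.continuousOn.continuousAt hre).eventually_ne hfa).and
        (hre.and (eventually_ne_nhds (by exact_mod_cast ha.ne')))
  have hquot : DifferentiableOn ℂ (fun s ↦ V s / f s) (ball (a : ℂ) ρ) :=
    (hV.mono fun z hz ↦ (hball z hz).2.1).div (hf.mono fun z hz ↦ (hball z hz).2.1)
      fun z hz ↦ (hball z hz).1
  let c : ℂ := (a + ρ / 2 : ℝ)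
  have hc : c ∈ ball (a : ℂ) ρ ∩ {s | a < s.re} := by
    refine ⟨?_, by simp only [c, mem_ofPred_eq, Complex.ofReal_re]; linarith⟩
    rw [mem_ball, Complex.dist_of_im_eq (by simp [c]), Complex.ofReal_re, Complex.ofReal_re,
      Real.dist_eq, add_sub_cancel_left, abs_of_pos (by positivity)]
    linarith
  obtain ⟨P, hPc, hP⟩ := hquot.isExactOn_ball.with_val_at c (c * complexMGF Y μ c)
  refine ⟨ρ, hρ, fun z ↦ P z / z,
    DifferentiableOn.div (fun z hz ↦ (hP z hz).differentiableAt.differentiableWithinAt)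
      differentiableOn_id fun z hz ↦ (hball z hz).2.2, fun z hz hza ↦ ?_⟩
  have heq : EqOn P (fun z ↦ z * complexMGF Y μ z) (ball (a : ℂ) ρ ∩ {s | a < s.re}) :=
    (isOpen_ball.inter (hopen a)).eqOn_of_deriv_eq
      ((convex_ball _ _).inter (convex_halfSpace_re_gt a)).isPreconnected
      (fun z hz ↦ (hP z hz.1).differentiableAt.differentiableWithinAt)
      ((differentiableOn_id_mul_complexMGF hE).mono inter_subset_right)
      (fun z hz ↦ by
        rw [(hP z hz.1).deriv, ← hid z hz.2, mul_div_cancel_left₀ _ (hball z hz.1).1]) hc hPc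
  simp only [heq ⟨hz, hza⟩]
  exact mul_div_cancel_left₀ _ (hball z hz).2.2

theorem Ioi_subset_integrableExpSet_of_mul_deriv_eq (ha₀ : 0 ≤ a₀) (hY : AEMeasurable Y μ)
    (hY₀ : ∀ᵐ ω ∂μ, Y ω ≤ 0) (hb : Ioi b ⊆ integrableExpSet Y μ)
    (hf : DifferentiableOn ℂ f {s | a₀ < s.re}) (hf₀ : ∀ a : ℝ, a₀ < a → f a ≠ 0)
    (hV : DifferentiableOn ℂ V {s | a₀ < s.re})
    (hid : ∀ s : ℂ, b < s.re → f s * deriv (fun z ↦ z * complexMGF Y μ z) s = V s) :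
    Ioi a₀ ⊆ integrableExpSet Y μ := by
  refine Ioi_subset_integrableExpSet hY hY₀ ⟨b + 1, hb (by simp)⟩ fun a ha hE ↦ ?_
  have hsub : {s : ℂ | a < s.re} ⊆ {s | a₀ < s.re} := fun s (hs : a < s.re) ↦ ha.trans hs
  exact exists_extension_complexMGF (ha₀.trans_lt ha) ha hf (hf₀ a ha) hV hE fun s hs ↦
    mul_deriv_eq_of_lt (hf.mono hsub) (hV.mono hsub) hE hid hs

end Landau

section PosDefLimits

theorem isPosDef_of_tendsto {ι : Type*} {l : Filter ι} [l.NeBot] {φ : ι → ℝ → ℂ} {r : ℝ → ℂ}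
    (hφ : ∀ᶠ i in l, IsPosDef (φ i)) (h : ∀ x, Tendsto (φ · x) l (𝓝 (r x))) : IsPosDef r := by
  intro B a
  refine ge_of_tendsto (f := fun i ↦ (∑ x ∈ B, ∑ y ∈ B,
    a x * starRingEnd ℂ (a y) * φ i (x - y)).re) ?_ (hφ.mono fun i hi ↦ hi B a)
  exact (Complex.continuous_re.tendsto _).comp <| tendsto_finsetSum _ fun x _ ↦
    tendsto_finsetSum _ fun y _ ↦ (h (x - y)).const_mul _

theorem IsPosDef.ofReal_mul {r : ℝ → ℂ} (hr : IsPosDef r) {c : ℝ} (hc : 0 ≤ c) :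
    IsPosDef fun x ↦ c * r x := by
  intro B a
  have h := mul_nonneg hc (hr B a)
  rw [← Complex.re_ofReal_mul, Finset.mul_sum] at h
  simpa only [Finset.mul_sum, mul_left_comm] using h

theorem sum_sum_mul_exp_sub_eq_normSq (B : Finset ℝ) (a : ℝ → ℂ) (t : ℝ) :
    ∑ x ∈ B, ∑ y ∈ B, a x * starRingEnd ℂ (a y) * Complex.exp ((x - y : ℝ) * t * I) =
      Complex.normSq (∑ x ∈ B, a x * Complex.exp (x * t * I)) := by
  rw [← Complex.mul_conj, map_sum, Finset.sum_mul_sum]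
  refine Finset.sum_congr rfl fun x _ ↦ Finset.sum_congr rfl fun y _ ↦ ?_
  have hexp : Complex.exp ((x - y : ℝ) * t * I) =
      Complex.exp (x * t * I) * starRingEnd ℂ (Complex.exp (y * t * I)) := by
    rw [← Complex.exp_conj, ← Complex.exp_add]
    simp only [map_mul, Complex.conj_ofReal, Complex.conj_I]
    push_cast
    ring_nf
  rw [hexp, map_mul]
  ring

variable {Ω : Type*} [MeasurableSpace Ω] {μ : Measure Ω} {Y : Ω → ℝ}

theorem isPosDef_integral_mul_exp (hY : AEMeasurable Y μ) {w : Ω → ℝ} (hw : Integrable w μ)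
    (hw₀ : 0 ≤ᵐ[μ] w) : IsPosDef fun x ↦ ∫ ω, w ω * Complex.exp (x * Y ω * I) ∂μ := by
  intro B a
  have hint (x : ℝ) : Integrable (fun ω ↦ w ω * Complex.exp (x * Y ω * I)) μ := by
    refine hw.ofReal.mul_bdd (c := 1) (by fun_prop) (ae_of_all _ fun ω ↦ ?_)
    rw [← Complex.ofReal_mul, Complex.norm_exp_ofReal_mul_I]
  have hsum : ∑ x ∈ B, ∑ y ∈ B, a x * starRingEnd ℂ (a y) *
      ∫ ω, w ω * Complex.exp ((x - y : ℝ) * Y ω * I) ∂μ =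
      (∫ ω, w ω * Complex.normSq (∑ x ∈ B, a x * Complex.exp (x * Y ω * I)) ∂μ : ℝ) := by
    rw [← integral_complex_ofReal]
    simp only [Complex.ofReal_mul, ← sum_sum_mul_exp_sub_eq_normSq, Finset.mul_sum]
    have hterm (x y : ℝ) : Integrable (fun ω ↦ w ω *
        (a x * starRingEnd ℂ (a y) * Complex.exp ((x - y : ℝ) * Y ω * I))) μ := by
      simpa only [mul_left_comm] using (hint (x - y)).const_mul (a x * starRingEnd ℂ (a y))
    rw [integral_finsetSum _ fun x _ ↦ integrable_finsetSum _ fun y _ ↦ hterm x y]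
    refine Finset.sum_congr rfl fun x _ ↦ ?_
    rw [integral_finsetSum _ fun y _ ↦ hterm x y]
    refine Finset.sum_congr rfl fun y _ ↦ ?_
    rw [← integral_const_mul]
    exact integral_congr_ae (ae_of_all _ fun ω ↦ mul_left_comm _ _ _)
  rw [hsum, Complex.ofReal_re]
  exact integral_nonneg_of_ae (hw₀.mono fun ω hω ↦ mul_nonneg hω (Complex.normSq_nonneg _))

theorem isPosDef_neg_deriv_complexMGF (hY₀ : ∀ᵐ ω ∂μ, Y ω ≤ 0) {σ : ℝ}
    (hσ : σ ∈ interior (integrableExpSet Y μ)) :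
    IsPosDef fun x ↦ -deriv (complexMGF Y μ) (σ + x * I) := by
  have hw : Integrable (fun ω ↦ -(Y ω) * exp (σ * Y ω)) μ := by
    simpa using (integrable_pow_mul_exp_of_mem_interior_integrableExpSet hσ 1).neg
  convert isPosDef_integral_mul_exp (aemeasurable_of_mem_interior_integrableExpSet hσ) hw
    (hY₀.mono fun ω hω ↦ mul_nonneg (neg_nonneg.2 hω) (exp_nonneg _)) using 2 with x
  rw [(hasDerivAt_complexMGF (by simpa using hσ)).deriv, ← integral_neg]
  refine integral_congr_ae (ae_of_all _ fun ω ↦ ?_)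
  push_cast
  rw [mul_assoc, ← Complex.exp_add, neg_mul]
  ring_nf

end PosDefLimits

section LogarithmicDerivative

theorem ne_zero_of_deriv_eventuallyEq_mul {f G : ℂ → ℂ} {p : ℂ} (hf : AnalyticAt ℂ f p)
    (hfin : analyticOrderAt f p ≠ ⊤) (hG : AnalyticAt ℂ G p) (h : deriv f =ᶠ[𝓝 p] f * G) :
    f p ≠ 0 := by
  intro h₀
  have horder := hf.analyticOrderAt_deriv_add_one
  simp only [h₀, sub_zero] at horder
  rw [analyticOrderAt_congr h, analyticOrderAt_mul hf hG] at horder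
  have hle : analyticOrderAt f p + 1 ≤ analyticOrderAt f p :=
    (add_le_add_left le_self_add 1).trans horder.le
  exact ((ENat.add_one_le_iff hfin).1 hle).false

theorem tendsto_sub_mul_logDeriv {f : ℂ → ℂ} {p : ℂ} (hf : AnalyticAt ℂ f p)
    (hfin : analyticOrderAt f p ≠ ⊤) :
    Tendsto (fun z ↦ (z - p) * logDeriv f z) (𝓝[≠] p) (𝓝 (analyticOrderNatAt f p)) := by
  obtain ⟨g, hg, hgp, hfg⟩ := hf.analyticOrderAt_ne_top.1 hfin
  set n := analyticOrderNatAt f p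
  have hlim : Tendsto (fun z ↦ n + (z - p) * logDeriv g z) (𝓝[≠] p) (𝓝 n) := by
    have hcont : ContinuousAt (fun z ↦ n + (z - p) * logDeriv g z) p :=
      continuousAt_const.add ((continuousAt_id.sub continuousAt_const).mul
        (hg.deriv.continuousAt.div hg.continuousAt hgp))
    simpa using hcont.tendsto.mono_left nhdsWithin_le_nhds
  refine hlim.congr' ?_
  filter_upwards [self_mem_nhdsWithin, hfg.eventually_nhds.filter_mono nhdsWithin_le_nhds,
    (hg.continuousAt.eventually_ne hgp).filter_mono nhdsWithin_le_nhds,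
    hg.eventually_analyticAt.filter_mono nhdsWithin_le_nhds] with z hz hfz hgz hgan
  have hzp : z - p ≠ 0 := sub_ne_zero.2 hz
  rw [(logDeriv_congr_nhds hfz).eq_of_nhds]
  simp only [smul_eq_mul]
  rw [logDeriv_mul (f := fun z ↦ (z - p) ^ n) z (pow_ne_zero _ hzp) hgz (by fun_prop)
      hgan.differentiableAt, logDeriv_fun_pow (by fun_prop), logDeriv_apply (fun z ↦ z - p)]
  simp only [deriv_sub_const, deriv_id'']
  field_simp

theorem tendsto_smul_of_hasDerivAt {E : Type*} [NormedAddCommGroup E] [NormedSpace ℝ E]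
    {g g' : ℝ → E} {c : E} (hg : ∀ σ > 0, HasDerivAt g (g' σ) σ)
    (hlim : Tendsto (fun σ ↦ σ • g' σ) (𝓝[>] 0) (𝓝 c)) :
    Tendsto (fun σ ↦ σ • g σ) (𝓝[>] 0) (𝓝 0) := by
  obtain ⟨δ, hδ, hbound⟩ : ∃ δ > 0, ∀ σ ∈ Ioc 0 δ, ‖σ • g' σ‖ ≤ ‖c‖ + 1 :=
    mem_nhdsGT_iff_exists_Ioc_subset.1 <|
      (hlim.norm.eventually (gt_mem_nhds (lt_add_one _))).mono fun _ ↦ le_of_lt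
  have hlog : ∀ σ ∈ Ioc 0 δ, ‖g σ‖ ≤ ‖g δ‖ + (‖c‖ + 1) * (log δ - log σ) := by
    intro σ hσ
    have hmv := (convex_Iic (log δ)).norm_image_sub_le_of_norm_hasDerivWithin_le
      (f := fun t ↦ g (exp t)) (f' := fun t ↦ exp t • g' (exp t)) (C := ‖c‖ + 1)
      (fun t _ ↦ ((hg _ (exp_pos t)).scomp t (hasDerivAt_exp t)).hasDerivWithinAt)
      (fun t ht ↦ hbound _ ⟨exp_pos t, (le_log_iff_exp_le hδ).1 ht⟩)
      (self_mem_Iic) (log_le_log hσ.1 hσ.2 : log σ ∈ Iic (log δ))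
    simp only [exp_log hδ, exp_log hσ.1, norm_eq_abs, abs_sub_comm (log σ)] at hmv
    rw [abs_of_nonneg (sub_nonneg.2 (log_le_log hσ.1 hσ.2))] at hmv
    linarith [norm_le_norm_add_norm_sub' (g σ) (g δ)]
  have hsqueeze : Tendsto (fun σ ↦ σ * (‖g δ‖ + (‖c‖ + 1) * log δ) - (‖c‖ + 1) * (log σ * σ))
      (𝓝[>] 0) (𝓝 0) := by
    have hlog₀ : Tendsto (fun σ ↦ log σ * σ) (𝓝[>] 0) (𝓝 0) := by
      simpa using tendsto_log_mul_rpow_nhdsGT_zero one_pos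
    have hid : Tendsto id (𝓝[>] (0 : ℝ)) (𝓝 0) := tendsto_id.mono_left nhdsWithin_le_nhds
    simpa using (hid.mul_const _).sub (hlog₀.const_mul (‖c‖ + 1))
  refine squeeze_zero_norm' ?_ hsqueeze
  filter_upwards [Ioc_mem_nhdsGT hδ] with σ hσ
  rw [norm_smul, norm_of_nonneg hσ.1.le]
  linarith [mul_le_mul_of_nonneg_left (hlog σ hσ) hσ.1.le]

theorem tendsto_mul_deriv_of_tendsto_mul_deriv_id_mul {M : ℂ → ℂ} {p c : ℂ} (hp : 0 < p.re)
    (hM : ∀ σ : ℝ, 0 < σ → DifferentiableAt ℂ M (p + σ))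
    (h : Tendsto (fun σ : ℝ ↦ σ * deriv (fun z ↦ z * M z) (p + σ)) (𝓝[>] 0) (𝓝 c)) :
    Tendsto (fun σ : ℝ ↦ σ * deriv M (p + σ)) (𝓝[>] 0) (𝓝 (c / p)) := by
  have hne (σ : ℝ) (hσ : 0 ≤ σ) : p + σ ≠ 0 := fun h ↦ by
    have := congrArg Complex.re h
    simp only [Complex.add_re, Complex.ofReal_re, Complex.zero_re] at this
    linarith
  have hN (σ : ℝ) (hσ : 0 < σ) : HasDerivAt (fun z ↦ z * M z) (M (p + σ) + (p + σ) *
      deriv M (p + σ)) (p + σ) := by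
    have h := (hasDerivAt_id' (p + σ : ℂ)).fun_mul (hM σ hσ).hasDerivAt
    rwa [one_mul] at h
  have hN₀ : Tendsto (fun σ : ℝ ↦ σ * ((p + σ) * M (p + σ))) (𝓝[>] 0) (𝓝 0) :=
    tendsto_smul_of_hasDerivAt (E := ℂ) (g := fun σ ↦ (p + σ) * M (p + σ))
      (g' := fun σ ↦ deriv (fun z ↦ z * M z) (p + σ))
      (fun σ hσ ↦ ((hN σ hσ).differentiableAt.hasDerivAt).comp_const_add .. |>.comp_ofReal) h
  have hpσ : Tendsto (fun σ : ℝ ↦ p + σ) (𝓝[>] 0) (𝓝 p) := by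
    have : Continuous fun σ : ℝ ↦ p + σ := by fun_prop
    simpa using (this.tendsto 0).mono_left nhdsWithin_le_nhds
  have hp₀ : p ≠ 0 := by simpa using hne 0 le_rfl
  have hlim := (h.sub (hN₀.div hpσ hp₀)).div hpσ hp₀
  rw [zero_div, sub_zero] at hlim
  refine hlim.congr' ?_
  filter_upwards [self_mem_nhdsWithin] with σ hσ
  have := hne σ (le_of_lt hσ)
  simp only [Pi.div_apply, (hN σ hσ).deriv]
  field_simp
  ring

end LogarithmicDerivative

section Residues

variable {Ω : Type*} [MeasurableSpace Ω] {μ : Measure Ω} {Y : Ω → ℝ} {R : ℂ → ℂ} {ε : ℝ}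

theorem xi_ne_zero_of_mul_deriv_eq (hε : ε ≠ 0) (hE : Ioi (1 / 2) ⊆ integrableExpSet Y μ)
    (hR : DifferentiableOn ℂ R {s | 1 / 2 < s.re})
    (hid : ∀ s : ℂ, 1 / 2 < s.re → xi s * deriv (fun z ↦ z * complexMGF Y μ z) s =
      -(ε * deriv xi s + xi s * R s)) {s : ℂ} (hs : 1 / 2 < s.re) : xi s ≠ 0 := by
  have hopen : IsOpen {s : ℂ | 1 / 2 < s.re} := isOpen_lt continuous_const Complex.continuous_re
  have hG : DifferentiableOn ℂ
      (fun s ↦ -(deriv (fun z ↦ z * complexMGF Y μ z) s + R s) / ε) {s | 1 / 2 < s.re} :=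
    (((differentiableOn_id_mul_complexMGF hE).deriv hopen).add hR).neg.div_const _
  refine ne_zero_of_deriv_eventuallyEq_mul (differentiable_xi.analyticAt s)
    (analyticOrderAt_ne_top differentiable_xi xi_one_half_ne_zero s)
    (hG.analyticAt (hopen.mem_nhds hs)) ?_
  filter_upwards [hopen.mem_nhds hs] with z hz
  have hε' : (ε : ℂ) ≠ 0 := Complex.ofReal_ne_zero.2 hε
  simp only [Pi.mul_apply]
  field_simp
  linear_combination hid z hz

theorem tendsto_mul_logDeriv_xi (γ : ℝ) :
    Tendsto (fun σ : ℝ ↦ σ * logDeriv xi (1 / 2 + γ * I + σ)) (𝓝[>] 0) (𝓝 (zeroMult γ)) := by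
  have hmap : Tendsto (fun σ : ℝ ↦ (1 / 2 + γ * I + σ : ℂ)) (𝓝[>] 0) (𝓝[≠] (1 / 2 + γ * I)) := by
    refine tendsto_nhdsWithin_iff.2 ⟨?_, ?_⟩
    · have : Continuous fun σ : ℝ ↦ (1 / 2 + γ * I + σ : ℂ) := by fun_prop
      simpa using (this.tendsto 0).mono_left nhdsWithin_le_nhds
    · filter_upwards [self_mem_nhdsWithin] with σ hσ
      simpa using (ne_of_gt hσ)
  simpa only [Function.comp_def, add_sub_cancel_left, zeroMult] using
    (tendsto_sub_mul_logDeriv (differentiable_xi.analyticAt _)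
      (analyticOrderAt_ne_top differentiable_xi xi_one_half_ne_zero _)).comp hmap

theorem tendsto_neg_mul_deriv_complexMGF (hE : Ioi (1 / 2) ⊆ integrableExpSet Y μ)
    (hRH : ∀ s : ℂ, 1 / 2 < s.re → xi s ≠ 0)
    (hid : ∀ s : ℂ, 1 / 2 < s.re → xi s * deriv (fun z ↦ z * complexMGF Y μ z) s =
      -(ε * deriv xi s + xi s * R s)) {γ : ℝ}
    (hRlim : Tendsto (fun σ : ℝ ↦ σ * R (1 / 2 + γ * I + σ)) (𝓝[>] 0)
      (𝓝 (ε * if γ = 0 then 1 / 2 else 0))) :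
    Tendsto (fun σ : ℝ ↦ σ * -deriv (complexMGF Y μ) (1 / 2 + γ * I + σ)) (𝓝[>] 0)
      (𝓝 (ε * residueCoeff γ)) := by
  have hre (σ : ℝ) (hσ : 0 < σ) : 1 / 2 < (1 / 2 + γ * I + σ : ℂ).re := by simpa using hσ
  have hN : Tendsto (fun σ : ℝ ↦ σ * deriv (fun z ↦ z * complexMGF Y μ z) (1 / 2 + γ * I + σ))
      (𝓝[>] 0) (𝓝 (-(ε * zeroMult γ + ε * if γ = 0 then 1 / 2 else 0))) := by
    refine (((tendsto_mul_logDeriv_xi γ).const_mul (ε : ℂ)).add hRlim).neg.congr' ?_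
    filter_upwards [self_mem_nhdsWithin] with σ hσ
    have hxi := hRH _ (hre σ hσ)
    have hidσ := hid _ (hre σ hσ)
    generalize (1 / 2 + γ * I + σ : ℂ) = z at hxi hidσ ⊢
    rw [logDeriv_apply]
    field_simp
    linear_combination -(σ : ℂ) * hidσ
  have hlim := (tendsto_mul_deriv_of_tendsto_mul_deriv_id_mul (by simp) (fun σ hσ ↦
    (hasDerivAt_complexMGF (mem_interior_integrableExpSet_of_lt hE
      (hre σ hσ))).differentiableAt) hN).neg
  simp only [← mul_neg] at hlim
  convert hlim using 2
  rw [residueCoeff]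
  split_ifs <;> push_cast <;> ring

theorem isPosDef_mul_residueCoeff (hY₀ : ∀ᵐ ω ∂μ, Y ω ≤ 0)
    (hE : Ioi (1 / 2) ⊆ integrableExpSet Y μ)
    (hlim : ∀ γ : ℝ, Tendsto (fun σ : ℝ ↦ σ * -deriv (complexMGF Y μ) (1 / 2 + γ * I + σ))
      (𝓝[>] 0) (𝓝 (ε * residueCoeff γ))) : IsPosDef fun γ ↦ ε * residueCoeff γ := by
  refine isPosDef_of_tendsto ?_ hlim
  filter_upwards [self_mem_nhdsWithin] with σ hσ
  have hσ₀ : 0 < σ := hσ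
  convert (isPosDef_neg_deriv_complexMGF hY₀ (mem_interior_integrableExpSet_of_lt hE
    (by linarith : 1 / 2 < 1 / 2 + σ))).ofReal_mul hσ₀.le using 4 with γ
  push_cast
  ring_nf

theorem pos_of_isPosDef_mul_residueCoeff (hε : ε ≠ 0)
    (h : IsPosDef fun γ ↦ ε * residueCoeff γ) : 0 < ε := by
  have hzero := h {0} fun _ ↦ 1
  simp only [Finset.sum_singleton, sub_zero, residueCoeff, zeroMult_zero] at hzero
  norm_num at hzero
  exact hzero.lt_of_ne' hε

theorem false_of_xi_mul_deriv_eq (hY : AEMeasurable Y μ) (hY₀ : ∀ᵐ ω ∂μ, Y ω ≤ 0)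
    (hint : Ioi 1 ⊆ integrableExpSet Y μ) (hε : ε ≠ 0)
    (hR : DifferentiableOn ℂ R {s | 1 / 2 < s.re})
    (hid : ∀ s : ℂ, 1 < s.re → xi s * deriv (fun z ↦ z * complexMGF Y μ z) s =
      -(ε * deriv xi s + xi s * R s))
    (hRlim : ∀ γ : ℝ, Tendsto (fun σ : ℝ ↦ σ * R (1 / 2 + γ * I + σ)) (𝓝[>] 0)
      (𝓝 (ε * if γ = 0 then 1 / 2 else 0))) : False := by
  have hopen : IsOpen {s : ℂ | 1 / 2 < s.re} := isOpen_lt continuous_const Complex.continuous_re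
  have hxi : DifferentiableOn ℂ xi {s | 1 / 2 < s.re} := differentiable_xi.differentiableOn
  have hV : DifferentiableOn ℂ (fun s ↦ -(ε * deriv xi s + xi s * R s)) {s | 1 / 2 < s.re} :=
    (((hxi.deriv hopen).const_mul _).add (hxi.mul hR)).neg
  have hE : Ioi (1 / 2) ⊆ integrableExpSet Y μ :=
    Ioi_subset_integrableExpSet_of_mul_deriv_eq (by norm_num) hY hY₀ hint hxi
      (fun a ha ↦ xi_ofReal_ne_zero (by linarith)) hV hid
  have hid' (s : ℂ) (hs : 1 / 2 < s.re) := mul_deriv_eq_of_lt hxi hV hE hid hs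
  have hRH (s : ℂ) (hs : 1 / 2 < s.re) := xi_ne_zero_of_mul_deriv_eq hε hE hR hid' hs
  have hpd := isPosDef_mul_residueCoeff hY₀ hE fun γ ↦
    tendsto_neg_mul_deriv_complexMGF hE hRH hid' (hRlim γ)
  refine not_isPosDef_residueCoeff hRH ?_
  convert hpd.ofReal_mul (inv_nonneg.2 (pos_of_isPosDef_mul_residueCoeff hε hpd).le) with γ
  rw [Complex.ofReal_inv, inv_mul_cancel_left₀ (Complex.ofReal_ne_zero.2 hε)]

end Residues

section PrimeSums

variable {s : ℂ}

theorem one_lt_norm_prime_cpow (p : Nat.Primes) (hs : 0 < s.re) : 1 < ‖(p : ℂ) ^ s‖ := by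
  rw [Complex.norm_natCast_cpow_of_pos p.2.pos]
  exact Real.one_lt_rpow (mod_cast p.2.one_lt) hs

theorem prime_cpow_ne_zero (p : Nat.Primes) (s : ℂ) : (p : ℂ) ^ s ≠ 0 :=
  Complex.cpow_ne_zero_iff.2 (.inl (mod_cast p.2.ne_zero))

theorem prime_cpow_pow_ne_one (p : Nat.Primes) (hs : 0 < s.re) {k : ℕ} (hk : k ≠ 0) :
    ((p : ℂ) ^ s) ^ k ≠ 1 := fun h ↦ by
  have := one_lt_pow₀ (one_lt_norm_prime_cpow p hs) hk
  simp [← norm_pow, h] at this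

theorem term_vonMangoldt_prime_pow (p : Nat.Primes) (s : ℂ) (k : ℕ) :
    LSeries.term (fun n ↦ (ArithmeticFunction.vonMangoldt n : ℂ)) s (p ^ (k + 1)) =
      Real.log p * ((p : ℂ) ^ s)⁻¹ * (((p : ℂ) ^ s)⁻¹) ^ k := by
  rw [LSeries.term_of_ne_zero (pow_ne_zero _ p.2.ne_zero),
    ArithmeticFunction.vonMangoldt_apply_pow k.succ_ne_zero,
    ArithmeticFunction.vonMangoldt_apply_prime p.2, Nat.cast_pow,
    ← Complex.natCast_cpow_natCast_mul, Complex.cpow_nat_mul, div_eq_mul_inv, ← inv_pow, pow_succ']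
  ring

theorem hasSum_term_vonMangoldt_prime_pow (p : Nat.Primes) (hs : 0 < s.re) :
    HasSum (fun k : ℕ ↦ LSeries.term (fun n ↦ (ArithmeticFunction.vonMangoldt n : ℂ)) s
      (p ^ (k + 1))) (Real.log p / ((p : ℂ) ^ s - 1)) := by
  simp_rw [term_vonMangoldt_prime_pow]
  have hq0 := prime_cpow_ne_zero p s
  have hq1 : (p : ℂ) ^ s - 1 ≠ 0 :=
    sub_ne_zero.2 (by simpa using prime_cpow_pow_ne_one p hs one_ne_zero)
  have hq : ‖((p : ℂ) ^ s)⁻¹‖ < 1 := by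
    rw [norm_inv]
    exact inv_lt_one_of_one_lt₀ (one_lt_norm_prime_cpow p hs)
  have hvalue : (Real.log p : ℂ) / ((p : ℂ) ^ s - 1) =
      Real.log p * ((p : ℂ) ^ s)⁻¹ * (1 - ((p : ℂ) ^ s)⁻¹)⁻¹ := by
    rw [show 1 - ((p : ℂ) ^ s)⁻¹ = ((p : ℂ) ^ s - 1) / (p : ℂ) ^ s by field_simp]
    field_simp
  rw [hvalue]
  exact (hasSum_geometric_of_norm_lt_one hq).mul_left _

theorem hasSum_log_div_cpow_sub_one (hs : 1 < s.re) :
    HasSum (fun p : Nat.Primes ↦ Real.log p / ((p : ℂ) ^ s - 1)) (-logDeriv riemannZeta s) := by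
  let f : ℕ → ℂ := LSeries.term (fun n ↦ (ArithmeticFunction.vonMangoldt n : ℂ)) s
  have hf : Summable f := ArithmeticFunction.LSeriesSummable_vonMangoldt hs
  have hsupport : Function.support f ⊆ {n | IsPrimePow n} := fun n hn ↦ by
    contrapose! hn
    have : ArithmeticFunction.vonMangoldt n = 0 :=
      ArithmeticFunction.vonMangoldt_eq_zero_iff.2 hn
    simp [f, LSeries.term_def, this]
  have hfiber (p : Nat.Primes) :=
    (hasSum_term_vonMangoldt_prime_pow p (s := s) (by linarith)).tsum_eq
  have hsum : Summable fun p : Nat.Primes ↦ (Real.log p : ℂ) / ((p : ℂ) ^ s - 1) := by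
    simp_rw [← hfiber]
    exact (hf.comp_injective (i := fun pk : Nat.Primes × ℕ ↦ (pk.1 : ℕ) ^ (pk.2 + 1))
      (Subtype.val_injective.comp Nat.Primes.prodNatEquiv.injective)).prod
  have htsum : ∑' n, f n = -logDeriv riemannZeta s := by
    rw [logDeriv_apply, ← neg_div]
    exact ArithmeticFunction.LSeries_vonMangoldt_eq_deriv_riemannZeta_div hs
  rw [← htsum, tsum_eq_tsum_primes_of_support_subset_prime_powers hf hsupport]
  simp_rw [f, hfiber]
  exact hsum.hasSum

/-- The indicator function of the primes, as an arithmetic function with real values. -/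
def primeIndicator (n : ℕ) : ℝ := if n.Prime then 1 else 0

theorem primeIndicator_nonneg (n : ℕ) : 0 ≤ primeIndicator n := by
  unfold primeIndicator
  split_ifs <;> norm_num

theorem primePi_eq_primeCounting (x : ℝ) : primePi x = Nat.primeCounting ⌊x⌋₊ := by
  rw [← Nat.primesLE_card_eq_primeCounting, primePi, Nat.card_coe_set_eq, ← ncard_coe_finset]
  congr 1
  ext p
  simp only [mem_ofPred_eq, SetLike.mem_coe, Nat.mem_primesLE]
  constructor
  · rintro ⟨hp, hpx⟩
    exact ⟨(Nat.le_floor_iff' hp.ne_zero).2 hpx, hp⟩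
  · rintro ⟨hpx, hp⟩
    exact ⟨hp, (Nat.le_floor_iff' hp.ne_zero).1 hpx⟩

theorem sum_primeIndicator (n : ℕ) :
    ∑ k ∈ Finset.Icc 1 n, primeIndicator k = Nat.primeCounting n := by
  rw [← Nat.primesLE_card_eq_primeCounting]
  simp only [primeIndicator, Finset.sum_boole]
  congr 2
  ext p
  simp only [Finset.mem_filter, Finset.mem_Icc, Nat.mem_primesLE]
  exact ⟨fun h ↦ ⟨h.1.2, h.2⟩, fun h ↦ ⟨⟨h.2.one_le, h.1⟩, h.2⟩⟩

theorem primeCounting_le (n : ℕ) : Nat.primeCounting n ≤ n := by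
  rw [← Nat.primesLE_card_eq_primeCounting]
  calc (Nat.primesLE n).card ≤ (Finset.Icc 1 n).card := Finset.card_le_card fun p hp ↦ by
        rw [Nat.mem_primesLE] at hp
        exact Finset.mem_Icc.2 ⟨hp.2.one_le, hp.1⟩
    _ = n := by simp

theorem sum_primeIndicator_isBigO :
    (fun n ↦ ∑ k ∈ Finset.Icc 1 n, primeIndicator k) =O[atTop] fun n ↦ (n : ℝ) ^ (1 : ℝ) := by
  refine Asymptotics.IsBigO.of_bound 1 (.of_forall fun n ↦ ?_)
  rw [sum_primeIndicator, rpow_one, one_mul, RCLike.norm_natCast, RCLike.norm_natCast]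
  exact_mod_cast primeCounting_le n

/-- The prime zeta function `∑ p, p ^ (-s)`, as the Dirichlet series of the primes. -/
noncomputable def primeZeta (s : ℂ) : ℂ := LSeries (fun n ↦ (primeIndicator n : ℂ)) s

theorem abscissaOfAbsConv_primeIndicator_le :
    LSeries.abscissaOfAbsConv (fun n ↦ (primeIndicator n : ℂ)) ≤ (1 : ℝ) :=
  LSeries.abscissaOfAbsConv_le_of_forall_lt_LSeriesSummable fun _ hy ↦
    LSeriesSummable_of_sum_norm_bigO_and_nonneg sum_primeIndicator_isBigO primeIndicator_nonneg
      zero_le_one (by simpa using hy)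

theorem hasSum_log_div_cpow (hs : 1 < s.re) :
    HasSum (fun p : Nat.Primes ↦ Real.log p / (p : ℂ) ^ s) (-deriv primeZeta s) := by
  have habs := abscissaOfAbsConv_primeIndicator_le.trans_lt (EReal.coe_lt_coe_iff.2 hs)
  let t := LSeries.term (LSeries.logMul fun n ↦ (primeIndicator n : ℂ)) s
  have hsupport : Function.support t ⊆ {n | n.Prime} := fun n hn ↦ by
    contrapose! hn
    have : ¬ n.Prime := hn
    simp [t, LSeries.term_def, LSeries.logMul, primeIndicator, this]
  have hderiv : deriv primeZeta s = -LSeries (LSeries.logMul fun n ↦ (primeIndicator n : ℂ)) s :=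
    LSeries_deriv habs
  rw [hderiv, neg_neg]
  have hterm : (fun p : Nat.Primes ↦ (Real.log p : ℂ) / (p : ℂ) ^ s) =
      fun p : Nat.Primes ↦ t (p : ℕ) := by
    ext p
    simp [t, LSeries.term_of_ne_zero p.2.ne_zero, LSeries.logMul, primeIndicator, p.2,
      Complex.natCast_log]
  rw [hterm]
  exact (hasSum_subtype_iff_of_support_subset hsupport).2
    (LSeriesSummable_logMul_of_lt_re habs).hasSum

/-- The sum `∑ p, log p / (p ^ s * (p ^ (2 * s) - 1))`, by which the derivative of the prime zeta
function differs from `ζ' / ζ (s) - ζ' / ζ (2 * s)`. -/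
noncomputable def primeRemainder (s : ℂ) : ℂ :=
  ∑' p : Nat.Primes, Real.log p / ((p : ℂ) ^ s * (((p : ℂ) ^ s) ^ 2 - 1))

theorem deriv_primeZeta (hs : 1 < s.re) :
    deriv primeZeta s =
      logDeriv riemannZeta s - logDeriv riemannZeta (2 * s) + primeRemainder s := by
  have h := ((hasSum_log_div_cpow_sub_one hs).sub (hasSum_log_div_cpow hs)).sub
    (hasSum_log_div_cpow_sub_one (s := 2 * s) (by simp; linarith))
  have hterm (p : Nat.Primes) :
      (Real.log p : ℂ) / ((p : ℂ) ^ s - 1) - Real.log p / (p : ℂ) ^ s -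
        Real.log p / ((p : ℂ) ^ (2 * s) - 1) =
      Real.log p / ((p : ℂ) ^ s * (((p : ℂ) ^ s) ^ 2 - 1)) := by
    have hsquare : (p : ℂ) ^ (2 * s) = ((p : ℂ) ^ s) ^ 2 := mod_cast Complex.cpow_nat_mul _ 2 s
    have hq0 := prime_cpow_ne_zero p s
    have hq1 := sub_ne_zero.2 (prime_cpow_pow_ne_one p (s := s) (by linarith) one_ne_zero)
    have hq2 := sub_ne_zero.2 (prime_cpow_pow_ne_one p (s := s) (by linarith) two_ne_zero)
    rw [pow_one] at hq1
    rw [hsquare]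
    field_simp
    ring
  simp_rw [hterm] at h
  rw [primeRemainder, h.tsum_eq]
  ring

theorem summable_log_mul_rpow_neg {a : ℝ} (ha : 1 < a) :
    Summable fun p : Nat.Primes ↦ Real.log p * (p : ℝ) ^ (-a) := by
  have hδ : 0 < (a - 1) / 2 := by linarith
  refine Summable.of_nonneg_of_le (fun p ↦ mul_nonneg (log_natCast_nonneg _) (by positivity))
    (fun p ↦ ?_) ((Nat.Primes.summable_rpow (r := -((a + 1) / 2))).2 (by linarith) |>.mul_left
      ((a - 1) / 2)⁻¹)
  have hp : (0 : ℝ) < p := mod_cast p.2.pos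
  calc Real.log p * (p : ℝ) ^ (-a)
      ≤ (p : ℝ) ^ ((a - 1) / 2) / ((a - 1) / 2) * (p : ℝ) ^ (-a) := by
        gcongr
        exact log_le_rpow_div hp.le hδ
    _ = ((a - 1) / 2)⁻¹ * (p : ℝ) ^ (-((a + 1) / 2)) := by
        rw [div_mul_eq_mul_div, ← rpow_add hp, inv_mul_eq_div]
        ring_nf

theorem norm_primeRemainder_term_le (p : Nat.Primes) {a : ℝ} (ha : 0 < a) (hs : a ≤ s.re) :
    ‖(Real.log p : ℂ) / ((p : ℂ) ^ s * (((p : ℂ) ^ s) ^ 2 - 1))‖ ≤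
      (1 - (2 : ℝ) ^ (-(2 * a)))⁻¹ * (Real.log p * (p : ℝ) ^ (-(3 * a))) := by
  have hp : (0 : ℝ) < p := mod_cast p.2.pos
  have hc : 0 < 1 - (2 : ℝ) ^ (-(2 * a)) :=
    sub_pos.2 (rpow_lt_one_of_one_lt_of_neg one_lt_two (by linarith))
  have hq : (p : ℝ) ^ a ≤ ‖(p : ℂ) ^ s‖ := by
    rw [Complex.norm_natCast_cpow_of_pos p.2.pos]
    exact rpow_le_rpow_of_exponent_le (mod_cast p.2.one_le) hs
  have hpow (k : ℕ) : ((p : ℝ) ^ a) ^ k = (p : ℝ) ^ (k * a) := by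
    rw [← rpow_natCast, ← rpow_mul hp.le, mul_comm]
  have hsub : (1 - (2 : ℝ) ^ (-(2 * a))) * (p : ℝ) ^ (2 * a) ≤ ‖((p : ℂ) ^ s) ^ 2 - 1‖ := by
    have htwo : 1 ≤ (2 : ℝ) ^ (-(2 * a)) * (p : ℝ) ^ (2 * a) := by
      rw [rpow_neg zero_le_two, inv_mul_eq_div, one_le_div (by positivity)]
      exact rpow_le_rpow zero_le_two (mod_cast p.2.two_le) (by positivity)
    calc (1 - (2 : ℝ) ^ (-(2 * a))) * (p : ℝ) ^ (2 * a)
        ≤ ((p : ℝ) ^ a) ^ 2 - 1 := by rw [hpow]; push_cast; linarith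
      _ ≤ ‖(p : ℂ) ^ s‖ ^ 2 - 1 := by gcongr
      _ = ‖((p : ℂ) ^ s) ^ 2‖ - ‖(1 : ℂ)‖ := by rw [norm_pow, norm_one]
      _ ≤ ‖((p : ℂ) ^ s) ^ 2 - 1‖ := norm_sub_norm_le _ _
  have hlog : 0 ≤ Real.log p := log_natCast_nonneg _
  rw [norm_div, norm_mul, Complex.norm_of_nonneg hlog]
  calc Real.log p / (‖(p : ℂ) ^ s‖ * ‖((p : ℂ) ^ s) ^ 2 - 1‖)
      ≤ Real.log p / ((p : ℝ) ^ a * ((1 - (2 : ℝ) ^ (-(2 * a))) * (p : ℝ) ^ (2 * a))) := by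
        gcongr
    _ = (1 - (2 : ℝ) ^ (-(2 * a)))⁻¹ * (Real.log p * (p : ℝ) ^ (-(3 * a))) := by
        rw [mul_left_comm, ← rpow_add hp, rpow_neg hp.le, show a + 2 * a = 3 * a by ring]
        field_simp

theorem differentiableAt_primeRemainder (hs : 1 / 3 < s.re) :
    DifferentiableAt ℂ primeRemainder s := by
  obtain ⟨a, ha, has⟩ := exists_between hs
  have hopen : IsOpen {z : ℂ | a < z.re} := isOpen_lt continuous_const Complex.continuous_re
  refine (Complex.differentiableOn_tsum_of_summable_norm
    ((summable_log_mul_rpow_neg (by linarith : 1 < 3 * a)).mul_left _) (fun p z hz ↦ ?_) hopen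
    fun p z (hz : a < z.re) ↦ norm_primeRemainder_term_le p (by linarith) hz.le).differentiableAt
    (hopen.mem_nhds has)
  have hz0 : 0 < z.re := lt_trans (by linarith) (mem_ofPred_eq ▸ hz)
  have hcpow : DifferentiableAt ℂ (fun z : ℂ ↦ (p : ℂ) ^ z) z :=
    differentiableAt_id.const_cpow (.inl (mod_cast p.2.ne_zero))
  exact ((differentiableAt_const _).div (hcpow.mul ((hcpow.pow 2).sub_const 1))
    (mul_ne_zero (prime_cpow_ne_zero p z) (sub_ne_zero.2
      (prime_cpow_pow_ne_one p hz0 two_ne_zero)))).differentiableWithinAt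

end PrimeSums

section ExplicitFormula

variable {s : ℂ}

theorem differentiableAt_logDeriv {f : ℂ → ℂ} (hf : AnalyticAt ℂ f s) (h0 : f s ≠ 0) :
    DifferentiableAt ℂ (logDeriv f) s :=
  (hf.deriv.div hf h0).differentiableAt

/-- The archimedean factor of `xi`, normalized so that `xi s = (s - 1) * archFactor s * ζ(s)`. -/
noncomputable def archFactor (s : ℂ) : ℂ := s * s.Gammaℝ

theorem archFactor_ne_zero (hs : 0 < s.re) : archFactor s ≠ 0 :=
  mul_ne_zero (fun h ↦ by simp [h] at hs) (Complex.Gammaℝ_ne_zero_of_re_pos hs)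

theorem analyticAt_archFactor (hs : 0 < s.re) : AnalyticAt ℂ archFactor s := by
  have hinv : AnalyticAt ℂ (fun z : ℂ ↦ z.Gammaℝ⁻¹) s :=
    Complex.differentiable_Gammaℝ_inv.analyticAt s
  refine (analyticAt_id.mul
    (hinv.inv (inv_ne_zero (Complex.Gammaℝ_ne_zero_of_re_pos hs)))).congr (.of_forall fun z ↦ ?_)
  simp [archFactor]

theorem logDeriv_xi (hs : 0 < s.re) (hs1 : s ≠ 1) (hζ : riemannZeta s ≠ 0) :
    logDeriv xi s = 1 / (s - 1) + logDeriv archFactor s + logDeriv riemannZeta s := by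
  have hxi : xi =ᶠ[𝓝 s] fun z ↦ (z - 1) * archFactor z * riemannZeta z := by
    filter_upwards [(isOpen_lt continuous_const Complex.continuous_re).mem_nhds hs,
      eventually_ne_nhds hs1] with z hz hz1
    rw [xi_eq_mul_riemannZeta hz hz1, archFactor]
    ring
  have hsub : s - 1 ≠ 0 := sub_ne_zero.2 hs1
  have harch := archFactor_ne_zero hs
  have hdiff := (analyticAt_archFactor hs).differentiableAt
  rw [(logDeriv_congr_nhds hxi).eq_of_nhds,
    logDeriv_mul (f := fun z ↦ (z - 1) * archFactor z) _ (mul_ne_zero hsub harch) hζ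
      (by fun_prop) (differentiableAt_riemannZeta hs1),
    logDeriv_mul (f := fun z ↦ z - 1) (g := archFactor) s hsub harch (by fun_prop) hdiff]
  simp [logDeriv_apply]

/-- The part of the logarithmic derivative formula for `∑ p, log p / p ^ s` that is regular on the
closed half-plane `1 / 2 ≤ re s`: see `neg_two_cpow_div_sub_deriv_primeZeta`. -/
noncomputable def regularPart (s : ℂ) : ℂ :=
  dslope (fun z : ℂ ↦ (2 : ℂ) ^ (1 - z)) 1 s + primeRemainder s - logDeriv archFactor s +
    logDeriv archFactor (2 * s) - logDeriv xi (2 * s)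

theorem neg_two_cpow_div_sub_deriv_primeZeta (hs : 1 < s.re) :
    -(2 : ℂ) ^ (1 - s) / (s - 1) - deriv primeZeta s =
      -(logDeriv xi s + regularPart s + 1 / (2 * s - 1)) := by
  have hs1 : s ≠ 1 := fun h ↦ by simp [h] at hs
  have h2s : 1 < (2 * s).re := by
    norm_num
    linarith
  have h2s1 : 2 * s ≠ 1 := fun h ↦ by simp [h] at h2s
  have hslope : dslope (fun z : ℂ ↦ (2 : ℂ) ^ (1 - z)) 1 s = ((2 : ℂ) ^ (1 - s) - 1) / (s - 1) := by
    simp [dslope_of_ne _ hs1, slope_def_field]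
  rw [deriv_primeZeta hs, regularPart, hslope,
    logDeriv_xi (by linarith) hs1 (riemannZeta_ne_zero_of_one_le_re hs.le),
    logDeriv_xi (by linarith) h2s1 (riemannZeta_ne_zero_of_one_le_re h2s.le)]
  ring

theorem differentiableAt_regularPart (hs : 1 / 2 ≤ s.re) : DifferentiableAt ℂ regularPart s := by
  have h2s : 1 ≤ (2 * s).re := by
    norm_num
    linarith
  have hslope : DifferentiableAt ℂ (dslope (fun z : ℂ ↦ (2 : ℂ) ^ (1 - z)) 1) s := by
    have hcpow : Differentiable ℂ fun z : ℂ ↦ (2 : ℂ) ^ (1 - z) := fun z ↦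
      (differentiableAt_id.const_sub 1).const_cpow (.inl two_ne_zero)
    exact ((Complex.differentiableOn_dslope univ_mem).2 hcpow.differentiableOn).differentiableAt
      univ_mem
  have harch {z : ℂ} (hz : 0 < z.re) : DifferentiableAt ℂ (logDeriv archFactor) z :=
    differentiableAt_logDeriv (analyticAt_archFactor hz) (archFactor_ne_zero hz)
  have hdouble : DifferentiableAt ℂ (fun z : ℂ ↦ 2 * z) s := by fun_prop
  have hxi : DifferentiableAt ℂ (logDeriv xi) (2 * s) :=
    differentiableAt_logDeriv (differentiable_xi.analyticAt _) (xi_ne_zero_of_one_le_re h2s)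
  exact (((hslope.add (differentiableAt_primeRemainder (by linarith))).sub
    (harch (by linarith))).add ((harch (by linarith)).comp s hdouble)).sub (hxi.comp s hdouble)

theorem tendsto_mul_add_div_two_mul_sub_one {F : ℂ → ℂ} {γ : ℝ} (c : ℂ)
    (hF : ContinuousAt F (1 / 2 + γ * I)) :
    Tendsto (fun σ : ℝ ↦ σ * (F (1 / 2 + γ * I + σ) + c / (2 * (1 / 2 + γ * I + σ) - 1)))
      (𝓝[>] 0) (𝓝 (c * if γ = 0 then 1 / 2 else 0)) := by
  have hregular : Tendsto (fun σ : ℝ ↦ σ * F (1 / 2 + γ * I + σ)) (𝓝[>] 0) (𝓝 0) := by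
    have hFσ : ContinuousAt (fun σ : ℝ ↦ F (1 / 2 + γ * I + σ)) 0 :=
      ContinuousAt.comp (g := F) (by simpa using hF) (by fun_prop)
    have hcont := Complex.continuous_ofReal.continuousAt.fun_mul hFσ
    simpa using hcont.tendsto.mono_left (nhdsWithin_le_nhds (s := Ioi 0))
  have hpole : Tendsto (fun σ : ℝ ↦ (σ : ℂ) / (2 * (1 / 2 + γ * I + σ) - 1)) (𝓝[>] 0)
      (𝓝 (if γ = 0 then 1 / 2 else 0)) := by
    split_ifs with hγ
    · refine tendsto_const_nhds.congr' ?_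
      filter_upwards [self_mem_nhdsWithin] with σ (hσ : 0 < σ)
      have : (σ : ℂ) ≠ 0 := mod_cast hσ.ne'
      rw [hγ, Complex.ofReal_zero, zero_mul, add_zero]
      field_simp
      ring
    · have hcont : ContinuousAt (fun σ : ℝ ↦ (σ : ℂ) / (2 * (1 / 2 + γ * I + σ) - 1)) 0 := by
        refine ContinuousAt.div (by fun_prop) (by fun_prop) fun h ↦ hγ ?_
        simpa using congr_arg Complex.im h
      simpa using hcont.tendsto.mono_left (nhdsWithin_le_nhds (s := Ioi 0))
  rw [← zero_add (c * _)]
  exact (hregular.add (hpole.const_mul c)).congr fun σ ↦ by ring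

end ExplicitFormula

section TailMellin

/-- The Mellin transform `∫ x > a, d x * x ^ (-s)`, normalized like a Dirichlet series in `s`. -/
noncomputable def tailMellin (a : ℝ) (d : ℝ → ℝ) (s : ℂ) : ℂ :=
  ∫ x in Ioi a, d x * (x : ℂ) ^ (-s)

/-- The measure `d x dx` on `(a, ∞)`, which presents the Mellin transform of a nonnegative `d` as
the moment generating function of `-log`. -/
noncomputable def tailMeasure (a : ℝ) (d : ℝ → ℝ) : Measure ℝ :=
  (volume.restrict (Ioi a)).withDensity fun x ↦ ENNReal.ofReal (d x)

variable {a b K L : ℝ} {d e : ℝ → ℝ} {s : ℂ}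

theorem integral_tailMeasure (hd : AEMeasurable d (volume.restrict (Ioi a)))
    (hd₀ : ∀ x > a, 0 ≤ d x) (f : ℝ → ℂ) :
    ∫ x, f x ∂tailMeasure a d = ∫ x in Ioi a, (d x : ℂ) * f x := by
  rw [tailMeasure,
    integral_withDensity_eq_integral_toReal_smul₀ hd.ennreal_ofReal (by simp)]
  refine setIntegral_congr_fun measurableSet_Ioi fun x hx ↦ ?_
  simp [ENNReal.toReal_ofReal (hd₀ x hx)]

theorem exp_mul_neg_log {x : ℝ} (hx : 0 < x) (s : ℂ) :
    Complex.exp (s * ((-log x : ℝ) : ℂ)) = (x : ℂ) ^ (-s) := by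
  rw [Complex.cpow_def_of_ne_zero (mod_cast hx.ne'), ← Complex.ofReal_log hx.le]
  congr 1
  push_cast
  ring

theorem complexMGF_neg_log_tailMeasure (ha : 0 ≤ a)
    (hd : AEMeasurable d (volume.restrict (Ioi a))) (hd₀ : ∀ x > a, 0 ≤ d x) :
    complexMGF (fun x ↦ -log x) (tailMeasure a d) = tailMellin a d := by
  funext s
  rw [complexMGF, integral_tailMeasure hd hd₀]
  refine setIntegral_congr_fun measurableSet_Ioi fun x hx ↦ ?_
  simp only [exp_mul_neg_log (ha.trans_lt hx)]

theorem ae_tailMeasure_neg_log_nonpos (ha : 1 ≤ a) (d : ℝ → ℝ) :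
    ∀ᵐ x ∂tailMeasure a d, -log x ≤ 0 := by
  refine (withDensity_absolutelyContinuous _ _).ae_le ?_
  filter_upwards [ae_restrict_mem measurableSet_Ioi] with x hx
  exact neg_nonpos.2 (log_nonneg (ha.trans hx.le))

theorem integrableOn_mul_cpow (ha : 0 < a) (hd : AEMeasurable d (volume.restrict (Ioi a)))
    (hK : ∀ x > a, |d x| ≤ K) (hs : 1 < s.re) :
    IntegrableOn (fun x ↦ d x * (x : ℂ) ^ (-s)) (Ioi a) := by
  refine (integrableOn_Ioi_cpow_of_lt (by simpa using hs) ha).bdd_mul (c := K)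
    (Complex.measurable_ofReal.comp_aemeasurable hd).aestronglyMeasurable ?_
  filter_upwards [ae_restrict_mem measurableSet_Ioi] with x hx
  simpa using hK x hx

theorem Ioi_one_subset_integrableExpSet_tailMeasure (ha : 0 < a)
    (hd : AEMeasurable d (volume.restrict (Ioi a))) (hd₀ : ∀ x > a, 0 ≤ d x)
    (hK : ∀ x > a, |d x| ≤ K) :
    Ioi 1 ⊆ integrableExpSet (fun x ↦ -log x) (tailMeasure a d) := by
  intro σ hσ
  rw [integrableExpSet, mem_ofPred_eq, tailMeasure,
    integrable_withDensity_iff_integrable_smul₀' hd.ennreal_ofReal (by simp)]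
  refine (integrableOn_mul_cpow (s := σ) ha hd hK (by simpa using hσ)).norm.congr ?_
  filter_upwards [ae_restrict_mem measurableSet_Ioi] with x hx
  have hx₀ : 0 < x := ha.trans hx
  rw [norm_mul, Complex.norm_real, norm_of_nonneg (hd₀ x hx), smul_eq_mul,
    ENNReal.toReal_ofReal (hd₀ x hx), Complex.norm_cpow_eq_rpow_re_of_pos hx₀,
    rpow_def_of_pos hx₀]
  simp [mul_comm]

theorem tailMellin_mul_add_mul (ha : 0 < a) (hd : AEMeasurable d (volume.restrict (Ioi a)))
    (hdK : ∀ x > a, |d x| ≤ K) (he : AEMeasurable e (volume.restrict (Ioi a)))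
    (heK : ∀ x > a, |e x| ≤ L) (hs : 1 < s.re) (u v : ℝ) :
    tailMellin a (fun x ↦ u * d x + v * e x) s = u * tailMellin a d s + v * tailMellin a e s := by
  simp only [tailMellin, ← integral_const_mul]
  rw [← integral_add ((integrableOn_mul_cpow ha hd hdK hs).const_mul _)
    ((integrableOn_mul_cpow ha he heK hs).const_mul _)]
  push_cast
  simp only [add_mul, mul_assoc]

/-- The function `1 / x` cut off beyond `b`; its Mellin transform, multiplied by `s`, is entire. -/
noncomputable def invCutoff (b : ℝ) : ℝ → ℝ := (Iic b).indicator fun x ↦ x⁻¹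

theorem measurable_invCutoff (b : ℝ) : Measurable (invCutoff b) :=
  measurable_inv.indicator measurableSet_Iic

theorem invCutoff_mem_Icc (b : ℝ) {x : ℝ} (hx : 1 ≤ x) : invCutoff b x ∈ Icc 0 1 := by
  unfold invCutoff indicator
  split_ifs
  · exact ⟨by positivity, inv_le_one_of_one_le₀ hx⟩
  · exact ⟨le_rfl, zero_le_one⟩

theorem mul_tailMellin_invCutoff (ha : 0 < a) (hab : a ≤ b) (hs : s ≠ 0) :
    s * tailMellin a (invCutoff b) s = (a : ℂ) ^ (-s) - (b : ℂ) ^ (-s) := by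
  have hintegrand : EqOn (fun x : ℝ ↦ (invCutoff b x : ℂ) * (x : ℂ) ^ (-s))
      ((Iic b).indicator fun x : ℝ ↦ (x : ℂ) ^ (-s - 1)) (Ioi a) := by
    intro x hx
    have hx₀ : (x : ℂ) ≠ 0 := mod_cast (ha.trans hx).ne'
    by_cases hxb : x ∈ Iic b
    · simp only [invCutoff, indicator_of_mem hxb, Complex.cpow_sub _ _ hx₀, Complex.cpow_one]
      push_cast
      ring
    · simp [invCutoff, indicator_of_notMem hxb]
  have h0 : (0 : ℝ) ∉ uIcc a b := notMem_uIcc_of_lt ha (ha.trans_le hab)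
  rw [tailMellin, setIntegral_congr_fun measurableSet_Ioi hintegrand,
    setIntegral_indicator measurableSet_Iic, Ioi_inter_Iic, ← intervalIntegral.integral_of_le hab,
    integral_cpow (.inr ⟨fun h ↦ hs (by linear_combination -h), h0⟩), sub_add_cancel]
  field_simp
  ring

theorem aemeasurable_div_of_hasDerivAt {F f : ℝ → ℝ} (hF : ∀ x > a, HasDerivAt F (f x) x) :
    AEMeasurable (fun x ↦ F x / x) (volume.restrict (Ioi a)) :=
  (ContinuousOn.aemeasurable (fun x hx ↦ (hF x hx).continuousAt.continuousWithinAt)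
    measurableSet_Ioi).div aemeasurable_id

theorem mul_tailMellin_div {F f : ℝ → ℝ} (ha : 0 < a)
    (hf : AEMeasurable f (volume.restrict (Ioi a)))
    (hfK : ∀ x > a, |f x| ≤ K) (hF : ∀ x ≥ a, HasDerivAt F (f x) x) (hFa : F a = 0)
    (hFK : ∀ x > a, |F x / x| ≤ K) (hs : 1 < s.re) :
    s * tailMellin a (fun x ↦ F x / x) s = tailMellin a f s := by
  have hs₀ : s ≠ 0 := fun h ↦ by simp [h] at hs; linarith
  have hintF := integrableOn_mul_cpow ha
    (aemeasurable_div_of_hasDerivAt fun x hx ↦ hF x (le_of_lt hx)) hFK hs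
  have hintf := integrableOn_mul_cpow ha hf hfK hs
  have hderiv : ∀ x ∈ Ici a, HasDerivAt (fun x : ℝ ↦ (F x : ℂ) * (x : ℂ) ^ (-s))
      (f x * (x : ℂ) ^ (-s) - s * ((F x / x : ℝ) * (x : ℂ) ^ (-s))) x := by
    intro x hx
    have hx₀ : x ≠ 0 := (ha.trans_le hx).ne'
    have hx₀' : (x : ℂ) ≠ 0 := mod_cast hx₀
    refine ((hF x hx).ofReal_comp.fun_mul
      (hasDerivAt_ofReal_cpow_const hx₀ (neg_ne_zero.2 hs₀))).congr_deriv ?_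
    rw [Complex.cpow_sub _ _ hx₀', Complex.cpow_one]
    push_cast
    field_simp
    ring
  have hlim : Tendsto (fun x : ℝ ↦ (F x : ℂ) * (x : ℂ) ^ (-s)) atTop (𝓝 0) := by
    have hpow := (tendsto_rpow_neg_atTop (sub_pos.2 hs)).const_mul K
    rw [mul_zero] at hpow
    refine squeeze_zero_norm' ?_ hpow
    filter_upwards [eventually_gt_atTop a] with x hx
    have hx₀ : 0 < x := ha.trans hx
    calc ‖(F x : ℂ) * (x : ℂ) ^ (-s)‖ = |F x / x| * x ^ (-(s.re - 1)) := by
          rw [norm_mul, Complex.norm_real, Complex.norm_cpow_eq_rpow_re_of_pos hx₀, Complex.neg_re,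
            neg_sub, rpow_sub hx₀, rpow_one, rpow_neg hx₀.le, abs_div, abs_of_pos hx₀, norm_eq_abs]
          field_simp
      _ ≤ K * x ^ (-(s.re - 1)) := by gcongr; exact hFK x hx
  have h := integral_Ioi_of_hasDerivAt_of_tendsto' hderiv (hintf.sub (hintF.const_mul s)) hlim
  rw [integral_sub hintf (hintF.const_mul s), integral_const_mul, hFa] at h
  exact (sub_eq_zero.1 (h.trans (by simp))).symm

end TailMellin

theorem abs_le_of_mem_Icc {x b : ℝ} (hx : x ∈ Icc 0 b) : |x| ≤ b :=
  (abs_of_nonneg hx.1).trans_le hx.2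

section LogarithmicIntegral

variable {x : ℝ} {s : ℂ}

theorem continuousAt_one_div_log (hx : 1 < x) : ContinuousAt (fun t ↦ 1 / log t) x :=
  continuousAt_const.div (continuousAt_log (by linarith)) (log_pos hx).ne'

theorem intervalIntegrable_one_div_log {a b : ℝ} (ha : 1 < a) (hb : 1 < b) :
    IntervalIntegrable (fun t ↦ 1 / log t) volume a b :=
  ContinuousOn.intervalIntegrable fun _ hx ↦
    (continuousAt_one_div_log ((lt_min ha hb).trans_le hx.1)).continuousWithinAt

theorem hasDerivAt_Li (hx : 1 < x) : HasDerivAt Li (1 / log x) x :=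
  intervalIntegral.integral_hasDerivAt_right (intervalIntegrable_one_div_log one_lt_two hx)
    (ContinuousOn.stronglyMeasurableAtFilter isOpen_Ioi
      (fun _ hy ↦ (continuousAt_one_div_log hy).continuousWithinAt) x hx)
    (continuousAt_one_div_log hx)

theorem one_div_log_mem_Icc (hx : 2 ≤ x) : 1 / log x ∈ Icc 0 2 := by
  have hlog : 1 / 2 ≤ log x := by linarith [log_two_gt_d9, log_le_log two_pos hx]
  exact ⟨by positivity, by rw [div_le_iff₀ (by linarith)]; linarith⟩

theorem Li_div_mem_Icc (hx : 2 ≤ x) : Li x / x ∈ Icc 0 2 := by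
  refine ⟨div_nonneg (intervalIntegral.integral_nonneg hx fun t ht ↦
    (one_div_log_mem_Icc ht.1).1) (by linarith), (div_le_iff₀ (by linarith)).2 ?_⟩
  calc Li x ≤ ∫ _ in (2 : ℝ)..x, (2 : ℝ) :=
        intervalIntegral.integral_mono_on hx
          (intervalIntegrable_one_div_log one_lt_two (by linarith)) (by simp)
          fun t ht ↦ (one_div_log_mem_Icc ht.1).2
    _ ≤ 2 * x := by
        rw [intervalIntegral.integral_const, smul_eq_mul]
        linarith

theorem aemeasurable_one_div_log (μ : Measure ℝ) : AEMeasurable (fun x ↦ 1 / log x) μ :=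
  (measurable_const.div measurable_log).aemeasurable

theorem mul_tailMellin_Li_div (hs : 1 < s.re) :
    s * tailMellin 2 (fun x ↦ Li x / x) s = tailMellin 2 (fun x ↦ 1 / log x) s :=
  mul_tailMellin_div two_pos (aemeasurable_one_div_log _)
    (fun _ hx ↦ abs_le_of_mem_Icc (one_div_log_mem_Icc hx.le))
    (fun _ hx ↦ hasDerivAt_Li (one_lt_two.trans_le hx)) (by simp [Li])
    (fun _ hx ↦ abs_le_of_mem_Icc (Li_div_mem_Icc hx.le)) hs

theorem hasDerivAt_tailMellin_one_div_log (hs : 1 < s.re) :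
    HasDerivAt (tailMellin 2 fun x ↦ 1 / log x) (-(2 : ℂ) ^ (1 - s) / (s - 1)) s := by
  have hmeas := aemeasurable_one_div_log (volume.restrict (Ioi 2))
  have hnonneg : ∀ x > (2 : ℝ), 0 ≤ 1 / log x := fun x hx ↦ (one_div_log_mem_Icc hx.le).1
  have hexp := Ioi_one_subset_integrableExpSet_tailMeasure two_pos hmeas hnonneg
    fun x hx ↦ abs_le_of_mem_Icc (one_div_log_mem_Icc hx.le)
  rw [← complexMGF_neg_log_tailMeasure zero_le_two hmeas hnonneg]
  refine (hasDerivAt_complexMGF (mem_interior_integrableExpSet_of_lt hexp hs)).congr_deriv ?_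
  have hintegrand : EqOn (fun x : ℝ ↦ ((1 / log x : ℝ) : ℂ) *
      (((-log x : ℝ) : ℂ) * Complex.exp (s * ((-log x : ℝ) : ℂ))))
      (fun x : ℝ ↦ -(x : ℂ) ^ (-s)) (Ioi 2) := by
    intro x (hx : 2 < x)
    have hlog : (log x : ℂ) ≠ 0 := mod_cast (log_pos (by linarith)).ne'
    simp only [exp_mul_neg_log (by linarith : 0 < x)]
    push_cast
    field_simp
  rw [integral_tailMeasure hmeas hnonneg, setIntegral_congr_fun measurableSet_Ioi hintegrand,
    integral_neg, integral_Ioi_cpow_of_lt (by simpa using hs) two_pos, neg_add_eq_sub,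
    ← neg_sub s 1, div_neg, neg_div]
  simp [neg_div]

end LogarithmicIntegral

section PrimeCounting

variable {x : ℝ} {s : ℂ}

theorem primePi_div_mem_Icc (hx : 0 < x) : (primePi x / x : ℝ) ∈ Icc 0 1 := by
  refine ⟨by positivity, (div_le_one hx).2 ?_⟩
  rw [primePi_eq_primeCounting]
  exact (Nat.cast_le.2 (primeCounting_le _)).trans (Nat.floor_le hx.le)

theorem measurable_primePi : Measurable fun x ↦ (primePi x : ℝ) := by
  simp only [primePi_eq_primeCounting]
  exact (measurable_from_top (f := fun n : ℕ ↦ (Nat.primeCounting n : ℝ))).comp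
    Nat.measurable_floor

theorem mul_tailMellin_primePi_div (hs : 1 < s.re) :
    s * tailMellin 2 (fun x ↦ primePi x / x) s = primeZeta s := by
  have hintegrand : ∀ x ∈ Ioi (1 : ℝ),
      (∑ k ∈ Finset.Icc 1 ⌊x⌋₊, (primeIndicator k : ℂ)) * (x : ℂ) ^ (-(s + 1)) =
        ((primePi x / x : ℝ) : ℂ) * (x : ℂ) ^ (-s) := by
    intro x (hx : 1 < x)
    have hx₀ : (x : ℂ) ≠ 0 := mod_cast (by linarith : x ≠ 0)
    rw [← Complex.ofReal_sum, sum_primeIndicator, primePi_eq_primeCounting, neg_add,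
      ← sub_eq_add_neg, Complex.cpow_sub _ _ hx₀, Complex.cpow_one]
    push_cast
    ring
  rw [primeZeta, LSeries_eq_mul_integral_of_nonneg primeIndicator zero_le_one hs
    sum_primeIndicator_isBigO primeIndicator_nonneg,
    setIntegral_congr_fun measurableSet_Ioi hintegrand, tailMellin, ← integral_Ici_eq_integral_Ioi]
  congr 1
  symm
  refine setIntegral_eq_of_subset_of_forall_sdiff_eq_zero measurableSet_Ioi
    (Ici_subset_Ioi.2 one_lt_two) fun x hx ↦ ?_
  have hfloor : ⌊x⌋₊ < 2 := (Nat.floor_lt' two_ne_zero).2 (mod_cast not_le.1 hx.2)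
  have hzero : Nat.primeCounting ⌊x⌋₊ = 0 := by
    interval_cases ⌊x⌋₊ <;> simp
  simp [primePi_eq_primeCounting, hzero]

end PrimeCounting

section Conclusion

variable {ε b x : ℝ} {s : ℂ}

theorem hasDerivAt_primeZeta (hs : 1 < s.re) : HasDerivAt primeZeta (deriv primeZeta s) s :=
  (LSeries_hasDerivAt (abscissaOfAbsConv_primeIndicator_le.trans_lt
    (EReal.coe_lt_coe_iff.2 hs))).differentiableAt.hasDerivAt

theorem false_of_mul_complexMGF_eq {Ω : Type*} {mΩ : MeasurableSpace Ω} {μ : Measure Ω}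
    {Y : Ω → ℝ} {K : ℂ → ℂ} (hY : AEMeasurable Y μ) (hY₀ : ∀ᵐ ω ∂μ, Y ω ≤ 0)
    (hint : Ioi 1 ⊆ integrableExpSet Y μ) (hε : ε ≠ 0) (hK : Differentiable ℂ K)
    (hid : ∀ s : ℂ, 1 < s.re → s * complexMGF Y μ s =
      ε * (tailMellin 2 (fun x ↦ 1 / log x) s - primeZeta s) + K s) : False := by
  set F : ℂ → ℂ := fun s ↦ ε * regularPart s - deriv K s
  have hF {s : ℂ} (hs : 1 / 2 ≤ s.re) : DifferentiableAt ℂ F s :=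
    ((differentiableAt_regularPart hs).const_mul _).sub (hK.analyticAt s).deriv.differentiableAt
  refine false_of_xi_mul_deriv_eq (R := fun s ↦ F s + ε / (2 * s - 1)) hY hY₀ hint hε
    (fun s hs ↦ ?_) (fun s hs ↦ ?_)
    fun γ ↦ tendsto_mul_add_div_two_mul_sub_one ε (hF (by simp)).continuousAt
  · have h0 : 2 * s - 1 ≠ 0 := fun h ↦ by
      have := congr_arg Complex.re h
      norm_num at this
      rw [mem_ofPred_eq] at hs
      linarith
    have := hF (le_of_lt hs)
    exact DifferentiableAt.differentiableWithinAt (by fun_prop (disch := exact h0))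
  · have heq : (fun z ↦ z * complexMGF Y μ z) =ᶠ[𝓝 s]
        fun z ↦ ε * (tailMellin 2 (fun x ↦ 1 / log x) z - primeZeta z) + K z :=
      eventually_of_mem ((isOpen_lt continuous_const Complex.continuous_re).mem_nhds hs) hid
    have hderiv := (((hasDerivAt_tailMellin_one_div_log hs).fun_sub
      (hasDerivAt_primeZeta hs)).const_mul (ε : ℂ)).fun_add (hK s).hasDerivAt
    have hxi : xi s * logDeriv xi s = deriv xi s :=
      mul_div_cancel₀ _ (xi_ne_zero_of_one_le_re hs.le)
    rw [heq.deriv_eq, HasDerivAt.deriv hderiv, neg_two_cpow_div_sub_deriv_primeZeta hs]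
    linear_combination (-ε : ℂ) * hxi

/-- The error of the approximation of `π` by `Li`, relative to `x`. -/
noncomputable def relError (x : ℝ) : ℝ := (Li x - primePi x) / x

theorem abs_relError_le (hx : 2 ≤ x) : |relError x| ≤ 2 := by
  have hLi := Li_div_mem_Icc hx
  have hπ := primePi_div_mem_Icc (x := x) (by linarith)
  rw [relError, sub_div, abs_le]
  exact ⟨by linarith [hLi.1, hπ.2], by linarith [hLi.2, hπ.1]⟩

theorem aemeasurable_Li_div : AEMeasurable (fun x ↦ Li x / x) (volume.restrict (Ioi 2)) :=
  aemeasurable_div_of_hasDerivAt fun _ hx ↦ hasDerivAt_Li (one_lt_two.trans hx)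

theorem aemeasurable_primePi_div (μ : Measure ℝ) : AEMeasurable (fun x ↦ primePi x / x) μ :=
  (measurable_primePi.div measurable_id).aemeasurable

theorem aemeasurable_relError : AEMeasurable relError (volume.restrict (Ioi 2)) :=
  (aemeasurable_Li_div.sub (aemeasurable_primePi_div _)).congr
    (.of_forall fun _ ↦ (sub_div _ _ _).symm)

theorem mul_tailMellin_relError (hs : 1 < s.re) :
    s * tailMellin 2 relError s = tailMellin 2 (fun x ↦ 1 / log x) s - primeZeta s := by
  have h := tailMellin_mul_add_mul two_pos aemeasurable_Li_div
    (fun x hx ↦ abs_le_of_mem_Icc (Li_div_mem_Icc hx.le)) (aemeasurable_primePi_div _)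
    (fun x hx ↦ abs_le_of_mem_Icc (primePi_div_mem_Icc (two_pos.trans hx))) hs 1 (-1)
  have hrel : relError = fun x ↦ 1 * (Li x / x) + -1 * (primePi x / x) := by
    funext x
    rw [relError]
    ring
  rw [hrel, h, ← mul_tailMellin_Li_div hs, ← mul_tailMellin_primePi_div hs]
  push_cast
  ring

/-- The relative error times `ε`, corrected on `(0, b]` so as to be nonnegative there. -/
noncomputable def correctedError (ε b x : ℝ) : ℝ := ε * relError x + 2 * |ε| * b * invCutoff b x

theorem aemeasurable_correctedError (ε b : ℝ) :
    AEMeasurable (correctedError ε b) (volume.restrict (Ioi 2)) :=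
  (aemeasurable_relError.const_mul ε).add ((measurable_invCutoff b).aemeasurable.const_mul _)

theorem abs_mul_relError_le (ε : ℝ) (hx : 2 ≤ x) : |ε * relError x| ≤ 2 * |ε| := by
  rw [abs_mul, mul_comm]
  gcongr
  exact abs_relError_le hx

theorem correctedError_nonneg (h : ∀ x > b, 0 ≤ ε * (Li x - primePi x)) (hx : 2 ≤ x) :
    0 ≤ correctedError ε b x := by
  rw [correctedError, invCutoff]
  by_cases hxb : x ∈ Iic b
  · have hone : 1 ≤ b * x⁻¹ := (one_le_div (by linarith)).2 hxb
    rw [indicator_of_mem hxb, mul_assoc]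
    nlinarith [neg_le_of_abs_le (abs_mul_relError_le ε hx), abs_nonneg ε]
  · rw [indicator_of_notMem hxb, mul_zero, add_zero, relError, ← mul_div_assoc]
    exact div_nonneg (h x (not_le.1 hxb)) (by linarith)

theorem abs_correctedError_le (hb : 0 ≤ b) (hx : 2 ≤ x) :
    |correctedError ε b x| ≤ 2 * |ε| + 2 * |ε| * b := by
  refine (abs_add_le _ _).trans (add_le_add (abs_mul_relError_le ε hx) ?_)
  have hcutoff := invCutoff_mem_Icc b (one_le_two.trans hx)
  have hcoeff : 0 ≤ 2 * |ε| * b := by positivity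
  exact (abs_of_nonneg (mul_nonneg hcoeff hcutoff.1)).trans_le
    (mul_le_of_le_one_right hcoeff hcutoff.2)

theorem mul_tailMellin_correctedError (hb : 2 ≤ b) (hs : 1 < s.re) :
    s * tailMellin 2 (correctedError ε b) s =
      ε * (tailMellin 2 (fun x ↦ 1 / log x) s - primeZeta s) +
        2 * |ε| * b * ((2 : ℂ) ^ (-s) - (b : ℂ) ^ (-s)) := by
  have hs₀ : s ≠ 0 := Complex.ne_zero_of_one_lt_re hs
  have h := tailMellin_mul_add_mul two_pos aemeasurable_relError
    (fun x hx ↦ abs_relError_le (le_of_lt hx)) (measurable_invCutoff b).aemeasurable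
    (fun x hx ↦ abs_le_of_mem_Icc (invCutoff_mem_Icc b (one_lt_two.trans hx).le)) hs ε
    (2 * |ε| * b)
  have hcutoff := mul_tailMellin_invCutoff two_pos hb hs₀
  rw [← mul_tailMellin_relError hs, ← Complex.ofReal_ofNat, ← hcutoff]
  refine (congr_arg (s * ·) h).trans ?_
  push_cast
  ring

theorem false_of_forall_mul_Li_sub_primePi_nonneg (hb : 2 ≤ b) (hε : ε ≠ 0)
    (h : ∀ x > b, 0 ≤ ε * (Li x - primePi x)) : False := by
  have hmeas := aemeasurable_correctedError ε b
  have hnonneg : ∀ x > 2, 0 ≤ correctedError ε b x := fun x hx ↦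
    correctedError_nonneg h (le_of_lt hx)
  have hb₀ : (b : ℂ) ≠ 0 := mod_cast (two_pos.trans_le hb).ne'
  have hentire {c : ℂ} (hc : c ≠ 0) : Differentiable ℂ fun s : ℂ ↦ c ^ (-s) := fun s ↦
    differentiableAt_id.neg.const_cpow (.inl hc)
  refine false_of_mul_complexMGF_eq (Y := fun x ↦ -log x) measurable_log.neg.aemeasurable
    (ae_tailMeasure_neg_log_nonpos one_le_two _)
    (Ioi_one_subset_integrableExpSet_tailMeasure two_pos hmeas hnonneg fun x hx ↦
      abs_correctedError_le (two_pos.trans_le hb).le (le_of_lt hx)) hε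
    (((hentire two_ne_zero).sub (hentire hb₀)).const_mul (2 * |ε| * b : ℂ)) fun s hs ↦ ?_
  rw [complexMGF_neg_log_tailMeasure zero_le_two hmeas hnonneg]
  exact mul_tailMellin_correctedError hb hs

end Conclusion

end Littlewood

/-- (Littlewood, 1914) The difference `π(x) − Li(x)` changes sign infinitely often. -/
theorem littlewood_sign_changes :
    ∀ T : ℝ,
      (∃ x : ℝ, T < x ∧ (primePi x : ℝ) > Li x) ∧
      (∃ y : ℝ, T < y ∧ (primePi y : ℝ) < Li y) := by
  intro T
  constructor <;> by_contra! hle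
  · refine Littlewood.false_of_forall_mul_Li_sub_primePi_nonneg (le_max_right T 2) one_ne_zero
      fun x hx ↦ ?_
    linarith [hle x (max_lt_iff.1 hx).1]
  · refine Littlewood.false_of_forall_mul_Li_sub_primePi_nonneg (le_max_right T 2)
      (neg_ne_zero.2 one_ne_zero) fun x hx ↦ ?_
    linarith [hle x (max_lt_iff.1 hx).1]
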